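/- Let f ∈ 𝒮(S^m) be a symmetric m-tensor field on ℝⁿ with Schwartz components, and let 1 ≤ k ≤ min{n−1, m}. Then there exist uniquely determined smooth symmetric tensor fields g ∈ C^∞(S^m) and v ∈ C^∞(S^{m−k}) such that f = g + d^k v, δ^k g = 0, and g(x) → 0, v(x) → 0 as |x| → ∞. Moreover there is a constant C such that |g(x)| ≤ C(1+|x|)^{1−n} and |d^ℓ v(x)| ≤ C(1+|x|)^{k+1−ℓ−n} for every 0 ≤ ℓ ≤ k and all x ∈ ℝⁿ. -/

import Mathlib

noncomputable section

open MeasureTheory Filter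
open scoped RealInnerProductSpace BigOperators

/-- `ℝⁿ` with the Euclidean structure. -/
abbrev En (n : ℕ) := EuclideanSpace ℝ (Fin n)

/-- A symmetric `m`-tensor on `ℝⁿ` (pointwise): a family of reals indexed by
`(i₁,…,i_m)`, invariant under permutations of the indices. -/
def IsSymTensor {n m : ℕ} (F : (Fin m → Fin n) → ℝ) : Prop :=
  ∀ (π : Equiv.Perm (Fin m)) (i : Fin m → Fin n), F (i ∘ π) = F i

/-- A symmetric `m`-tensor field on `ℝⁿ`. -/
def IsSymField {n m : ℕ} (f : (Fin m → Fin n) → En n → ℝ) : Prop :=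
  ∀ (π : Equiv.Perm (Fin m)) (i : Fin m → Fin n), f (i ∘ π) = f i

/-- All components of the field are Schwartz functions. -/
def IsSchwartzField {n m : ℕ} (f : (Fin m → Fin n) → En n → ℝ) : Prop :=
  ∀ i, ∃ φ : SchwartzMap (En n) ℝ, ⇑φ = f i

/-- Symmetrization `σ` of a tensor: average over all permutations of the indices. -/
def symz {n m : ℕ} {α : Type*} [AddCommMonoid α] [Module ℝ α]
    (F : (Fin m → Fin n) → α) : (Fin m → Fin n) → α :=
  fun i => ((m.factorial : ℝ))⁻¹ • ∑ π : Equiv.Perm (Fin m), F (i ∘ π)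

/-- The `q`-th momentum ray transform
`(J^q f)(x,ξ) = ∫ t^q f_{i₁…i_m}(x+tξ) ξ^{i₁}⋯ξ^{i_m} dt`, as a function on all of
`ℝⁿ × ℝⁿ`; its restriction to `TSⁿ⁻¹ = {|ξ|=1, ⟨x,ξ⟩=0}` is `I^q f`. -/
def momRT {n m : ℕ} (q : ℕ) (f : (Fin m → Fin n) → En n → ℝ) (x ξ : En n) : ℝ :=
  ∫ t : ℝ, t ^ q * ∑ i : Fin m → Fin n, f i (x + t • ξ) * ∏ r, ξ (i r)

/-- Coordinate partial derivative `∂/∂x^j`. -/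
def pd {n : ℕ} (j : Fin n) (u : En n → ℝ) : En n → ℝ :=
  fun x => fderiv ℝ u x (EuclideanSpace.single j 1)

/-- Inner differentiation (symmetrized derivative) `d`. -/
def dsym {n m : ℕ} (u : (Fin m → Fin n) → En n → ℝ) :
    (Fin (m + 1) → Fin n) → En n → ℝ :=
  symz (fun i => pd (i (Fin.last m)) (u (fun s => i s.castSucc)))

/-- Iterated inner differentiation `d^k`. -/
def dpow {n m : ℕ} : (k : ℕ) → ((Fin m → Fin n) → En n → ℝ) →
    (Fin (m + k) → Fin n) → En n → ℝ
  | 0, u => u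
  | k + 1, u => dsym (dpow k u)

/-- Divergence `δ`. -/
def divg {n m : ℕ} (u : (Fin (m + 1) → Fin n) → En n → ℝ) :
    (Fin m → Fin n) → En n → ℝ :=
  fun i x => ∑ j : Fin n, pd j (u (Fin.snoc i j)) x

/-- Iterated divergence `δ^k`. -/
def divpow {n : ℕ} : (k : ℕ) → {p : ℕ} → ((Fin (p + k) → Fin n) → En n → ℝ) →
    (Fin p → Fin n) → En n → ℝ
  | 0, _, u => u
  | k + 1, _, u => divpow k (divg u)

/-- Partial derivative `∂/∂x^j` in the first slot of a function of `(x, ξ)`. -/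
def pdx {n : ℕ} (j : Fin n) (F : En n → En n → ℝ) : En n → En n → ℝ :=
  fun x ξ => fderiv ℝ (fun x' => F x' ξ) x (EuclideanSpace.single j 1)

/-- Partial derivative `∂/∂ξ^j` in the second slot of a function of `(x, ξ)`. -/
def pdxi {n : ℕ} (j : Fin n) (F : En n → En n → ℝ) : En n → En n → ℝ :=
  fun x ξ => fderiv ℝ (fun ξ' => F x ξ') ξ (EuclideanSpace.single j 1)

/-- Iterated `∂x` derivatives along a list of indices. -/
def pdxList {n : ℕ} (l : List (Fin n)) (F : En n → En n → ℝ) : En n → En n → ℝ :=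
  l.foldr pdx F

/-- Iterated `∂ξ` derivatives along a list of indices. -/
def pdxiList {n : ℕ} (l : List (Fin n)) (F : En n → En n → ℝ) : En n → En n → ℝ :=
  l.foldr pdxi F

/-- The John operator `J_{ij} = ∂²/∂x^i∂ξ^j − ∂²/∂x^j∂ξ^i`. -/
def johnOp {n : ℕ} (i j : Fin n) (F : En n → En n → ℝ) : En n → En n → ℝ :=
  fun x ξ => pdx i (pdxi j F) x ξ - pdx j (pdxi i F) x ξ

/-- Iterated John operators `J_{i₁j₁} ⋯ J_{i_r j_r}`. -/
def johnIter {n : ℕ} (l : List (Fin n × Fin n)) (F : En n → En n → ℝ) : En n → En n → ℝ :=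
  l.foldr (fun ij G => johnOp ij.1 ij.2 G) F

/-- Sharafutdinov's Schwartz space `𝒮(TSⁿ⁻¹)`: a function on
`TSⁿ⁻¹ = {(x,ξ) : |ξ|=1, ⟨x,ξ⟩=0}` is Schwartz iff it is the restriction of a
Schwartz function on `ℝⁿ × ℝⁿ`. -/
def IsSchwartzOnTS {n : ℕ} (φ : En n → En n → ℝ) : Prop :=
  ∃ Φ : SchwartzMap (En n × En n) ℝ, ∀ x ξ : En n, ‖ξ‖ = 1 → ⟪x, ξ⟫ = 0 → φ x ξ = Φ (x, ξ)

/-- Symmetric multiplication `i_{x^{⊗k}} : S^m → S^{m+k}`. -/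
def iPowTens {n m k : ℕ} (x : En n) (V : (Fin m → Fin n) → ℝ) :
    (Fin (m + k) → Fin n) → ℝ :=
  symz (fun i => (∏ r : Fin k, x (i (Fin.natAdd m r))) * V (fun s => i (Fin.castAdd k s)))

/-- Convolution (contraction) `j_{x^{⊗k}} : S^{m+k} → S^m`. -/
def jPowTens {n m k : ℕ} (x : En n) (F : (Fin (m + k) → Fin n) → ℝ) :
    (Fin m → Fin n) → ℝ :=
  fun i => ∑ j : Fin k → Fin n, (∏ r, x (j r)) * F (Fin.append i j)

/-- Euclidean norm of a tensor. -/
def tensNorm {n m : ℕ} (F : (Fin m → Fin n) → ℝ) : ℝ :=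
  Real.sqrt (∑ i, (F i) ^ 2)

section AbstractAlgebra

variable {n : ℕ} {V : Type*} [AddCommGroup V] [Module ℝ V]

/-- Symmetric tensors with values in `V`. -/
def SySub (n : ℕ) (V : Type*) [AddCommGroup V] [Module ℝ V] (m : ℕ) :
    Submodule ℝ ((Fin m → Fin n) → V) where
  carrier := {F | ∀ (π : Equiv.Perm (Fin m)) (i : Fin m → Fin n), F (i ∘ π) = F i}
  add_mem' := by
    intro a b ha hb π i
    simp [ha π i, hb π i]
  zero_mem' := by intro π i; rfl
  smul_mem' := by
    intro c a ha π i
    simp [ha π i]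

theorem symz_symm {m : ℕ} (F : (Fin m → Fin n) → V) (π : Equiv.Perm (Fin m))
    (i : Fin m → Fin n) : symz F (i ∘ π) = symz F i := by
  unfold symz
  congr 1
  exact Fintype.sum_equiv (Equiv.mulLeft π) _ _ (fun σ => rfl)

/-- extension of a permutation fixing the last index -/
def extPerm {m : ℕ} (π : Equiv.Perm (Fin m)) : Equiv.Perm (Fin (m + 1)) where
  toFun := Fin.lastCases (Fin.last m) (fun s => (π s).castSucc)
  invFun := Fin.lastCases (Fin.last m) (fun s => (π.symm s).castSucc)
  left_inv := by
    intro x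
    refine Fin.lastCases ?_ (fun s => ?_) x <;> simp
  right_inv := by
    intro x
    refine Fin.lastCases ?_ (fun s => ?_) x <;> simp

theorem snoc_comp_perm {m : ℕ} (i : Fin m → Fin n) (j : Fin n) (π : Equiv.Perm (Fin m)) :
    (Fin.snoc (i ∘ π) j : Fin (m + 1) → Fin n) = (Fin.snoc i j : Fin (m + 1) → Fin n) ∘ extPerm π := by
  funext x
  refine Fin.lastCases ?_ (fun s => ?_) x <;> simp [extPerm]

variable (D : Fin n → V →ₗ[ℝ] V)

/-- abstract inner derivative -/
def dA (m : ℕ) : SySub n V m →ₗ[ℝ] SySub n V (m + 1) where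
  toFun u := ⟨symz (fun i => D (i (Fin.last m)) (u.1 (fun s => i s.castSucc))),
    fun π i => symz_symm _ π i⟩
  map_add' u v := by
    ext i
    simp [symz, Finset.sum_add_distrib]
  map_smul' c u := by
    ext i
    simp [symz, Finset.smul_sum, smul_comm c]

/-- abstract divergence -/
def vA (m : ℕ) : SySub n V (m + 1) →ₗ[ℝ] SySub n V m where
  toFun u := ⟨fun i => ∑ j, D j (u.1 (Fin.snoc i j)), fun π i => by
    refine Finset.sum_congr rfl (fun j _ => ?_)
    rw [snoc_comp_perm, u.2]⟩
  map_add' u v := by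
    ext i
    simp [Finset.sum_add_distrib]
  map_smul' c u := by
    ext i
    simp [Finset.smul_sum]

/-- abstract Laplacian -/
def LA (m : ℕ) : SySub n V m →ₗ[ℝ] SySub n V m where
  toFun u := ⟨fun i => ∑ j, D j (D j (u.1 i)), fun π i => by
    refine Finset.sum_congr rfl (fun j _ => ?_)
    rw [u.2]⟩
  map_add' u v := by
    ext i
    simp [Finset.sum_add_distrib]
  map_smul' c u := by
    ext i
    simp [Finset.smul_sum]

theorem sum_perm_last {m : ℕ} (H : Fin (m + 1) → V) :
    (((m + 1).factorial : ℝ))⁻¹ • ∑ π : Equiv.Perm (Fin (m + 1)), H (π (Fin.last m))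
      = ((m : ℝ) + 1)⁻¹ • ∑ r, H r := by
  have h1 : ∀ s, ∑ π : Equiv.Perm (Fin (m + 1)), H (π s)
      = ∑ π : Equiv.Perm (Fin (m + 1)), H (π (Fin.last m)) := by
    intro s
    refine Fintype.sum_equiv (Equiv.mulRight (Equiv.swap s (Fin.last m))) _ _ (fun σ => ?_)
    simp
  have h2 : ∑ s, ∑ π : Equiv.Perm (Fin (m + 1)), H (π s) = ((m + 1).factorial : ℝ) • ∑ r, H r := by
    rw [Finset.sum_comm]
    have : ∀ π : Equiv.Perm (Fin (m + 1)), ∑ s, H (π s) = ∑ r, H r := fun π =>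
      Equiv.sum_comp π H
    simp only [this, Finset.sum_const, Finset.card_univ, Fintype.card_perm, Fintype.card_fin]
    rw [Nat.cast_smul_eq_nsmul]
  simp only [h1, Finset.sum_const, Finset.card_univ, Fintype.card_fin] at h2
  have hf : ((m + 1).factorial : ℝ) ≠ 0 := by positivity
  have hm : ((m : ℝ) + 1) ≠ 0 := by positivity
  rw [inv_smul_eq_iff₀ hf, smul_comm, ← h2, ← Nat.cast_smul_eq_nsmul ℝ, smul_smul]
  push_cast
  rw [inv_mul_cancel₀ hm, one_smul]

theorem dA_apply {m : ℕ} (u : SySub n V m) (i : Fin (m + 1) → Fin n) :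
    (dA D m u).1 i = ((m : ℝ) + 1)⁻¹ • ∑ r, D (i r) (u.1 (i ∘ r.succAbove)) := by
  rw [← sum_perm_last (fun r => D (i r) (u.1 (i ∘ r.succAbove)))]
  change (((m + 1).factorial : ℝ))⁻¹ • ∑ π : Equiv.Perm (Fin (m + 1)),
    D ((i ∘ π) (Fin.last m)) (u.1 (fun s => (i ∘ π) s.castSucc)) = _
  congr 1
  refine Finset.sum_congr rfl (fun π _ => ?_)
  change D (i (π (Fin.last m))) _ = _
  congr 1
  -- permutation relating the two tuples
  have hex : ∀ s : Fin m, ∃ t, (π (Fin.last m)).succAbove t = π s.castSucc := by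
    intro s
    apply Fin.exists_succAbove_eq
    intro h
    exact (Fin.castSucc_lt_last s).ne (π.injective h)
  choose t ht using hex
  have hinj : Function.Injective t := by
    intro a b hab
    have := ht a
    rw [hab, ht b] at this
    exact (Fin.castSucc_injective m (π.injective this)).symm
  have hbij : Function.Bijective t := Finite.injective_iff_bijective.mp hinj
  have := u.2 (Equiv.ofBijective t hbij) (i ∘ (π (Fin.last m)).succAbove)
  rw [← this]
  apply congrArg u.1
  funext s
  simp [ht]



theorem vA_dA_zero (hD : ∀ i j v, D i (D j v) = D j (D i v)) (u : SySub n V 0) : vA D 0 (dA D 0 u) = LA D 0 u := by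
  ext i
  change ∑ j, D j ((dA D 0 u).1 (Fin.snoc i j)) = ∑ j, D j (D j (u.1 i))
  refine Finset.sum_congr rfl (fun j _ => ?_)
  rw [dA_apply]
  rw [Fin.sum_univ_castSucc]
  simp only [Nat.cast_zero, zero_add, inv_one, one_smul, Finset.univ_eq_empty, Finset.sum_empty]
  have : (Fin.snoc i j : Fin 1 → Fin n) ∘ (Fin.last 0).succAbove = i := Subsingleton.elim _ _
  rw [this]
  congr 1

theorem vA_dA_succ (hD : ∀ i j v, D i (D j v) = D j (D i v)) {m : ℕ} (u : SySub n V (m + 1)) :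
    ((m : ℝ) + 2) • vA D (m + 1) (dA D (m + 1) u)
      = LA D (m + 1) u + ((m : ℝ) + 1) • dA D m (vA D m u) := by
  ext i
  change ((m : ℝ) + 2) • ∑ j, D j ((dA D (m + 1) u).1 (Fin.snoc i j))
    = ∑ j, D j (D j (u.1 i)) + ((m : ℝ) + 1) • (dA D m (vA D m u)).1 i
  have h1 : ∀ j, D j ((dA D (m + 1) u).1 (Fin.snoc i j)) = ((m : ℝ) + 2)⁻¹ •
      (D j (D j (u.1 i)) + ∑ r : Fin (m + 1), D (i r) (D j (u.1 (Fin.snoc (i ∘ r.succAbove) j)))) := by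
    intro j
    rw [dA_apply, map_smul]
    congr 1
    · push_cast; ring
    rw [Fin.sum_univ_castSucc, add_comm, map_add, map_sum]
    congr 1
    · simp only [Fin.snoc_last]
      have : (Fin.snoc i j : Fin (m + 2) → Fin n) ∘ (Fin.last (m + 1)).succAbove = i := by
        funext s
        simp
      rw [this]
    · refine Finset.sum_congr rfl (fun r _ => ?_)
      rw [hD]
      simp only [Fin.snoc_castSucc]
      have : (Fin.snoc i j : Fin (m + 2) → Fin n) ∘ r.castSucc.succAbove
          = Fin.snoc (i ∘ r.succAbove) j := by
        funext s
        refine Fin.lastCases ?_ (fun s => ?_) s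
        · simp
        · simp
      rw [this]
  simp only [h1]
  rw [← Finset.smul_sum, smul_smul, mul_inv_cancel₀ (by positivity), one_smul,
    Finset.sum_add_distrib, dA_apply, smul_smul, mul_inv_cancel₀ (by positivity), one_smul]
  congr 1
  rw [Finset.sum_comm]
  refine Finset.sum_congr rfl (fun r _ => ?_)
  rw [← map_sum]
  rfl

theorem LA_dA (hD : ∀ i j v, D i (D j v) = D j (D i v)) {m : ℕ} (u : SySub n V m) : LA D (m + 1) (dA D m u) = dA D m (LA D m u) := by
  ext i
  change ∑ j, D j (D j ((dA D m u).1 i)) = _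
  rw [dA_apply]
  simp only [dA_apply, map_smul, map_sum]
  rw [← Finset.smul_sum, Finset.sum_comm]
  congr 1
  refine Finset.sum_congr rfl (fun r _ => ?_)
  change _ = D (i r) (∑ j, D j (D j (u.1 (i ∘ r.succAbove))))
  rw [map_sum]
  refine Finset.sum_congr rfl (fun j _ => ?_)
  rw [hD j (i r), hD j (i r)]

theorem LA_vA (hD : ∀ i j v, D i (D j v) = D j (D i v)) {m : ℕ} (u : SySub n V (m + 1)) : LA D m (vA D m u) = vA D m (LA D (m + 1) u) := by
  ext i
  change ∑ j, D j (D j (∑ l, D l (u.1 (Fin.snoc i l)))) = ∑ l, D l (∑ j, D j (D j (u.1 (Fin.snoc i l))))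
  simp only [map_sum]
  rw [Finset.sum_comm]
  refine Finset.sum_congr rfl (fun r _ => Finset.sum_congr rfl (fun j _ => ?_))
  rw [hD j r, hD j r]


/-- the operator `c Δ + m d δ` on rank `m` -/
def EA (c : ℝ) : (m : ℕ) → SySub n V m →ₗ[ℝ] SySub n V m
  | 0 => c • LA D 0
  | m + 1 => c • LA D (m + 1) + ((m : ℝ) + 1) • (dA D m ∘ₗ vA D m)

theorem EA_add (c : ℝ) (m : ℕ) (u : SySub n V m) : EA D (c + 1) m u = c • LA D m u + EA D 1 m u := by
  cases m with
  | zero => simp [EA, add_smul]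
  | succ m => simp [EA, add_smul, add_assoc]


theorem vA_dA (hD : ∀ i j v, D i (D j v) = D j (D i v)) (m : ℕ) (u : SySub n V m) : ((m : ℝ) + 1) • vA D m (dA D m u) = EA D 1 m u := by
  cases m with
  | zero => simp [EA, vA_dA_zero D hD]
  | succ m =>
    have := vA_dA_succ D hD u
    simp only [EA, LinearMap.add_apply, LinearMap.smul_apply, LinearMap.comp_apply, one_smul]
    rw [← this]
    push_cast
    congr 1
    ring

theorem EA_dA (hD : ∀ i j v, D i (D j v) = D j (D i v)) (c : ℝ) (m : ℕ) (u : SySub n V m) :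
    EA D c (m + 1) (dA D m u) = dA D m (EA D (c + 1) m u) := by
  rw [EA_add, ← vA_dA D hD]
  simp [EA, LA_dA D hD]

theorem vA_EA (hD : ∀ i j v, D i (D j v) = D j (D i v)) (c : ℝ) (m : ℕ) (u : SySub n V (m + 1)) :
    vA D m (EA D c (m + 1) u) = EA D (c + 1) m (vA D m u) := by
  rw [EA_add, ← vA_dA D hD]
  simp [EA, LA_vA D hD]

theorem LA_EA (hD : ∀ i j v, D i (D j v) = D j (D i v)) (c : ℝ) (m : ℕ) (u : SySub n V m) : LA D m (EA D c m u) = EA D c m (LA D m u) := by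
  cases m with
  | zero => simp [EA]
  | succ m => simp [EA, LA_dA D hD, LA_vA D hD]

theorem LAp_dA (hD : ∀ i j v, D i (D j v) = D j (D i v)) (N : ℕ) {m : ℕ} (u : SySub n V m) :
    (LA D (m + 1) ^ N) (dA D m u) = dA D m ((LA D m ^ N) u) := by
  induction N with
  | zero => simp
  | succ N ih => rw [pow_succ', pow_succ', Module.End.mul_apply, Module.End.mul_apply, ih, LA_dA D hD]

theorem LAp_vA (hD : ∀ i j v, D i (D j v) = D j (D i v)) (N : ℕ) {m : ℕ} (u : SySub n V (m + 1)) :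
    (LA D m ^ N) (vA D m u) = vA D m ((LA D (m + 1) ^ N) u) := by
  induction N with
  | zero => simp
  | succ N ih => rw [pow_succ', pow_succ', Module.End.mul_apply, Module.End.mul_apply, ih, LA_vA D hD]

theorem LAp_EA (hD : ∀ i j v, D i (D j v) = D j (D i v)) (N : ℕ) (c : ℝ) (m : ℕ) (u : SySub n V m) :
    (LA D m ^ N) (EA D c m u) = EA D c m ((LA D m ^ N) u) := by
  induction N with
  | zero => simp
  | succ N ih => rw [pow_succ', Module.End.mul_apply, Module.End.mul_apply, ih, LA_EA D hD]


/-- the quasi-inverse of `EA` -/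
def GA : (m : ℕ) → (c : ℝ) → SySub n V m →ₗ[ℝ] SySub n V m
  | 0, c => c⁻¹ • LinearMap.id
  | m + 1, c => c⁻¹ • (LA D (m + 1) ^ (m + 1) - ((m : ℝ) + 1) • (dA D m ∘ₗ GA m (c + 1) ∘ₗ vA D m))


theorem EA_GA (hD : ∀ i j v, D i (D j v) = D j (D i v)) (m : ℕ) (c : ℝ) (hc : 0 < c) (u : SySub n V m) :
    EA D c m (GA D m c u) = (LA D m ^ (m + 1)) u := by
  induction m generalizing c with
  | zero => simp [EA, GA, smul_smul, hc.ne']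
  | succ m ih =>
    have h : EA D c (m + 1) (GA D (m + 1) c u) = c⁻¹ • (EA D c (m + 1) ((LA D (m + 1) ^ (m + 1)) u)
        - ((m : ℝ) + 1) • EA D c (m + 1) (dA D m (GA D m (c + 1) (vA D m u)))) := by
      simp only [GA, LinearMap.smul_apply, LinearMap.sub_apply, LinearMap.comp_apply, map_smul, map_sub]
    rw [h, EA_dA D hD, ih (c + 1) (by linarith), LAp_vA D hD]
    simp only [EA, LinearMap.add_apply, LinearMap.smul_apply, LinearMap.comp_apply]
    rw [add_sub_cancel_right, smul_smul, inv_mul_cancel₀ hc.ne', one_smul, ← Module.End.mul_apply,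
      ← pow_succ']

theorem GA_EA (hD : ∀ i j v, D i (D j v) = D j (D i v)) (m : ℕ) (c : ℝ) (hc : 0 < c) (u : SySub n V m) :
    GA D m c (EA D c m u) = (LA D m ^ (m + 1)) u := by
  induction m generalizing c with
  | zero => simp [EA, GA, smul_smul, hc.ne']
  | succ m ih =>
    have h : GA D (m + 1) c (EA D c (m + 1) u) = c⁻¹ • ((LA D (m + 1) ^ (m + 1)) (EA D c (m + 1) u)
        - ((m : ℝ) + 1) • (dA D m (GA D m (c + 1) (vA D m (EA D c (m + 1) u))))) := by
      simp only [GA, LinearMap.smul_apply, LinearMap.sub_apply, LinearMap.comp_apply]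
    rw [h, vA_EA D hD, ih (c + 1) (by linarith), LAp_vA D hD, LAp_EA D hD]
    simp only [EA, LinearMap.add_apply, LinearMap.smul_apply, LinearMap.comp_apply]
    rw [add_sub_cancel_right, smul_smul, inv_mul_cancel₀ hc.ne', one_smul, ← Module.End.mul_apply,
      ← pow_succ']


/-- iterated `dA` -/
def dpA {m : ℕ} : (k : ℕ) → SySub n V m →ₗ[ℝ] SySub n V (m + k)
  | 0 => LinearMap.id
  | k + 1 => dA D (m + k) ∘ₗ dpA k

/-- iterated `vA` -/
def vpA : (k : ℕ) → {m : ℕ} → SySub n V (m + k) →ₗ[ℝ] SySub n V m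
  | 0, _ => LinearMap.id
  | k + 1, m => vpA k ∘ₗ vA D (m + k)


theorem EA_dpA (hD : ∀ i j v, D i (D j v) = D j (D i v)) (k : ℕ) (c : ℝ) (m : ℕ) (u : SySub n V m) :
    EA D c (m + k) (dpA D k u) = dpA D k (EA D (c + k) m u) := by
  induction k generalizing c with
  | zero => simp [dpA]
  | succ k ih =>
    change EA D c (m + k + 1) (dA D (m + k) (dpA D k u)) = dA D (m + k) (dpA D k _)
    rw [EA_dA D hD, ih]
    congr 4
    push_cast; ring

theorem LAp_dpA (hD : ∀ i j v, D i (D j v) = D j (D i v)) (N k : ℕ) (m : ℕ) (u : SySub n V m) :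
    (LA D (m + k) ^ N) (dpA D k u) = dpA D k ((LA D m ^ N) u) := by
  induction k with
  | zero => rfl
  | succ k ih =>
    change (LA D (m + k + 1) ^ N) (dA D (m + k) (dpA D k u)) = dA D (m + k) (dpA D k _)
    rw [LAp_dA D hD, ih]

theorem LAp_vpA (hD : ∀ i j v, D i (D j v) = D j (D i v)) (N k : ℕ) (m : ℕ) (u : SySub n V (m + k)) :
    (LA D m ^ N) (vpA D k u) = vpA D k ((LA D (m + k) ^ N) u) := by
  induction k with
  | zero => rfl
  | succ k ih =>
    change (LA D m ^ N) (vpA D k (vA D (m + k) u)) = vpA D k (vA D (m + k) _)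
    rw [ih, LAp_vA D hD]; rfl

theorem vdA_succ (hD : ∀ i j v, D i (D j v) = D j (D i v)) (k m : ℕ) (u : SySub n V m) :
    vpA D (k + 1) (dpA D (k + 1) u)
      = ((m : ℝ) + k + 1)⁻¹ • vpA D k (dpA D k (EA D ((k : ℝ) + 1) m u)) := by
  change vpA D k (vA D (m + k) (dA D (m + k) (dpA D k u))) = _
  have h := vA_dA D hD (m + k) (dpA D k u)
  rw [EA_dpA D hD] at h
  have hne : ((m : ℝ) + k + 1) ≠ 0 := by positivity
  rw [eq_inv_smul_iff₀ hne, ← map_smul]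
  congr 1
  push_cast at h
  rw [h, add_comm (1 : ℝ)]


/-- quasi-inverse of `δ^k d^k` -/
def BA (m : ℕ) : (k : ℕ) → SySub n V m →ₗ[ℝ] SySub n V m
  | 0 => LinearMap.id
  | k + 1 => ((m : ℝ) + k + 1) • (GA D m ((k : ℝ) + 1) ∘ₗ BA m k)


theorem BA_vd (hD : ∀ i j v, D i (D j v) = D j (D i v)) (m k : ℕ) (u : SySub n V m) :
    BA D m k (vpA D k (dpA D k u)) = (LA D m ^ (k * (m + 1))) u := by
  induction k generalizing u with
  | zero => simp [BA, vpA, dpA]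
  | succ k ih =>
    have hne : ((m : ℝ) + k + 1) ≠ 0 := by positivity
    rw [vdA_succ D hD]
    simp only [BA, LinearMap.smul_apply, LinearMap.comp_apply, map_smul]
    rw [ih, smul_smul, inv_mul_cancel₀ hne, one_smul, LAp_EA D hD, GA_EA D hD _ _ (by positivity),
      ← Module.End.mul_apply, ← pow_add]
    congr 2
    ring

theorem vd_BA (hD : ∀ i j v, D i (D j v) = D j (D i v)) (m k : ℕ) (u : SySub n V m) :
    vpA D k (dpA D k (BA D m k u)) = (LA D m ^ (k * (m + 1))) u := by
  induction k generalizing u with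
  | zero => simp [BA, vpA, dpA]
  | succ k ih =>
    have hne : ((m : ℝ) + k + 1) ≠ 0 := by positivity
    rw [vdA_succ D hD]
    simp only [BA, LinearMap.smul_apply, LinearMap.comp_apply, map_smul]
    rw [EA_GA D hD _ _ (by positivity), ← LAp_dpA D hD, ← LAp_vpA D hD, ih, smul_smul,
      inv_mul_cancel₀ hne, one_smul,
      ← Module.End.mul_apply, ← pow_add]
    congr 2
    ring


variable (W : ℕ → Submodule ℝ V)

/-- all components lie in `W a` -/
def OrdF (a : ℕ) {m : ℕ} (u : SySub n V m) : Prop := ∀ i, u.1 i ∈ W a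


theorem OrdF_dA (hW : ∀ a j v, v ∈ W a → D j v ∈ W (a + 1)) {a m : ℕ} (u : SySub n V m) (hu : OrdF W a u) : OrdF W (a + 1) (dA D m u) := by
  intro i
  rw [dA_apply]
  exact Submodule.smul_mem _ _ (Submodule.sum_mem _ (fun r _ => hW _ _ _ (hu _)))

theorem OrdF_vA (hW : ∀ a j v, v ∈ W a → D j v ∈ W (a + 1)) {a m : ℕ} (u : SySub n V (m + 1)) (hu : OrdF W a u) : OrdF W (a + 1) (vA D m u) := by
  intro i
  change ∑ j, D j (u.1 (Fin.snoc i j)) ∈ _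
  exact (Submodule.sum_mem _ (fun r _ => hW _ _ _ (hu _)))

theorem OrdF_LA (hW : ∀ a j v, v ∈ W a → D j v ∈ W (a + 1)) {a m : ℕ} (u : SySub n V m) (hu : OrdF W a u) : OrdF W (a + 2) (LA D m u) := by
  intro i
  change ∑ j, D j (D j (u.1 i)) ∈ _
  exact (Submodule.sum_mem _ (fun r _ => hW _ _ _ (hW _ _ _ (hu _))))

theorem OrdF_LAp (hW : ∀ a j v, v ∈ W a → D j v ∈ W (a + 1)) {a m : ℕ} (N : ℕ) (u : SySub n V m) (hu : OrdF W a u) :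
    OrdF W (a + 2 * N) ((LA D m ^ N) u) := by
  induction N with
  | zero => simpa using hu
  | succ N ih =>
    rw [pow_succ', Module.End.mul_apply]
    exact OrdF_LA D W hW _ ih

theorem OrdF_GA (hW : ∀ a j v, v ∈ W a → D j v ∈ W (a + 1)) {a m : ℕ} (c : ℝ) (u : SySub n V m) (hu : OrdF W a u) :
    OrdF W (a + 2 * m) (GA D m c u) := by
  induction m generalizing c a with
  | zero => intro i; exact Submodule.smul_mem _ _ (hu i)
  | succ m ih =>
    intro i
    have h1 := OrdF_LAp D W hW (m + 1) u hu
    have h2 := OrdF_dA D W hW _ (ih (c + 1) (vA D m u) (OrdF_vA D W hW u hu))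
    have e : a + 1 + 2 * m + 1 = a + 2 * (m + 1) := by ring
    rw [e] at h2
    exact Submodule.smul_mem _ _ (Submodule.sub_mem _ (h1 i) (Submodule.smul_mem _ _ (h2 i)))

theorem OrdF_BA (hW : ∀ a j v, v ∈ W a → D j v ∈ W (a + 1)) {a m : ℕ} (k : ℕ) (u : SySub n V m) (hu : OrdF W a u) :
    OrdF W (a + 2 * m * k) (BA D m k u) := by
  induction k with
  | zero => simpa [BA] using hu
  | succ k ih =>
    intro i
    have h := OrdF_GA D W hW ((k : ℝ) + 1) _ ih
    have e : a + 2 * m * k + 2 * m = a + 2 * m * (k + 1) := by ring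
    rw [e] at h
    exact Submodule.smul_mem _ _ (h i)

theorem OrdF_dpA (hW : ∀ a j v, v ∈ W a → D j v ∈ W (a + 1)) {a m : ℕ} (k : ℕ) (u : SySub n V m) (hu : OrdF W a u) :
    OrdF W (a + k) (dpA D k u) := by
  induction k with
  | zero => exact hu
  | succ k ih => exact OrdF_dA D W hW _ ih

theorem OrdF_vpA (hW : ∀ a j v, v ∈ W a → D j v ∈ W (a + 1)) {a m : ℕ} (k : ℕ) (u : SySub n V (m + k)) (hu : OrdF W a u) :
    OrdF W (a + k) (vpA D k u) := by
  induction k generalizing a with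
  | zero => exact hu
  | succ k ih =>
    have h := ih (vA D (m + k) u) (OrdF_vA D W hW _ hu)
    have e : a + 1 + k = a + (k + 1) := by ring
    rw [e] at h
    exact h

end AbstractAlgebra

section Liouville

variable {n : ℕ}

theorem pd_contDiff {u : En n → ℝ} (j : Fin n) (h : ContDiff ℝ (⊤ : ℕ∞) u) :
    ContDiff ℝ (⊤ : ℕ∞) (pd j u) := by
  unfold pd
  exact (h.fderiv_right (m := (⊤ : ℕ∞)) (by simp)).clm_apply contDiff_const

theorem smooth_diff {u : En n → ℝ} (h : ContDiff ℝ (⊤ : ℕ∞) u) : Differentiable ℝ u :=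
  h.differentiable (by simp)

theorem pd_add {u v : En n → ℝ} (j : Fin n) (hu : Differentiable ℝ u)
    (hv : Differentiable ℝ v) : pd j (u + v) = pd j u + pd j v := by
  funext x
  simp [pd, fderiv_add (hu x) (hv x)]

theorem pd_smul {u : En n → ℝ} (j : Fin n) (c : ℝ) (hu : Differentiable ℝ u) :
    pd j (c • u) = c • pd j u := by
  funext x
  simp [pd, fderiv_const_smul (hu x) c]

theorem pd_comm {u : En n → ℝ} (i j : Fin n) (h : ContDiff ℝ (⊤ : ℕ∞) u) :
    pd i (pd j u) = pd j (pd i u) := by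
  have key : ∀ (i j : Fin n) (x : En n), pd i (pd j u) x =
      fderiv ℝ (fderiv ℝ u) x (EuclideanSpace.single i 1) (EuclideanSpace.single j 1) := by
    intro i j x
    have hd : DifferentiableAt ℝ (fderiv ℝ u) x :=
      ((h.fderiv_right (m := (⊤ : ℕ∞)) (by simp)).differentiable (by simp)) x
    unfold pd
    rw [fderiv_clm_apply hd (differentiableAt_const _)]
    simp
  funext x
  rw [key, key]
  have hs : IsSymmSndFDerivAt ℝ u x :=
    (h.contDiffAt).isSymmSndFDerivAt (by simp; exact WithTop.coe_le_coe.2 (le_top : (2 : ℕ∞) ≤ ⊤))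
  exact hs _ _

/-- scalar Laplacian -/
def lap (u : En n → ℝ) : En n → ℝ := fun x => ∑ j, pd j (pd j u) x

theorem lap_contDiff {u : En n → ℝ} (h : ContDiff ℝ (⊤ : ℕ∞) u) :
    ContDiff ℝ (⊤ : ℕ∞) (lap u) := by
  unfold lap
  exact ContDiff.sum (fun j _ => pd_contDiff j (pd_contDiff j h))

theorem hasDerivAt_line {u : En n → ℝ} (hu : Differentiable ℝ u) (x : En n) (j : Fin n) (t : ℝ) :
    HasDerivAt (fun t : ℝ => u (x + t • EuclideanSpace.single j (1 : ℝ)))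
      (pd j u (x + t • EuclideanSpace.single j (1 : ℝ))) t := by
  have h1 : HasDerivAt (fun t : ℝ => x + t • EuclideanSpace.single j (1 : ℝ))
      (EuclideanSpace.single j (1 : ℝ)) t := by
    simpa using ((hasDerivAt_id t).smul_const (EuclideanSpace.single j (1 : ℝ))).const_add x
  exact (hu _).hasFDerivAt.comp_hasDerivAt t h1

theorem pd_pd_le_of_isLocalMax {h : En n → ℝ} (hh : ContDiff ℝ (⊤ : ℕ∞) h) {x : En n}
    (hx : IsLocalMax h x) (j : Fin n) : pd j (pd j h) x ≤ 0 := by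
  by_contra! hpos
  set φ : ℝ → ℝ := fun t => h (x + t • EuclideanSpace.single j (1 : ℝ)) with hφ
  have hd : ∀ t, HasDerivAt φ (pd j h (x + t • EuclideanSpace.single j (1 : ℝ))) t :=
    fun t => hasDerivAt_line (smooth_diff hh) x j t
  have hderiv : deriv φ = fun t => pd j h (x + t • EuclideanSpace.single j (1 : ℝ)) :=
    funext fun t => (hd t).deriv
  have hderiv2 : deriv (deriv φ) 0 = pd j (pd j h) x := by
    rw [hderiv, (hasDerivAt_line (smooth_diff (pd_contDiff j hh)) x j 0).deriv]
    simp
  have hcont : ContinuousAt (fun t : ℝ => x + t • EuclideanSpace.single j (1 : ℝ)) 0 := by fun_prop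
  have hmax : IsLocalMax φ 0 := by
    have : Tendsto (fun t : ℝ => x + t • EuclideanSpace.single j (1 : ℝ)) (nhds 0) (nhds x) := by
      simpa [ContinuousAt] using hcont
    have h2 := this.eventually hx
    simpa [IsLocalMax, IsMaxFilter, hφ] using h2
  have hmin : IsLocalMin φ 0 :=
    isLocalMin_of_deriv_deriv_pos (by rw [hderiv2]; exact hpos) hmax.deriv_eq_zero
      (hd 0).continuousAt
  have hconst : φ =ᶠ[nhds 0] fun _ => φ 0 := by
    filter_upwards [hmax, hmin] with t h1 h2 using le_antisymm h1 h2
  have h3 : deriv φ =ᶠ[nhds 0] deriv (fun _ => φ 0) := hconst.deriv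
  have h4 := h3.deriv_eq
  simp at h4
  linarith

theorem harmonic_le_zero {w : En n → ℝ} (hn : 0 < n) (hw : ContDiff ℝ (⊤ : ℕ∞) w)
    (hl : ∀ x, lap w x = 0) (h0 : Tendsto w (cocompact (En n)) (nhds 0)) (x0 : En n) :
    w x0 ≤ 0 := by
  by_contra! hc
  set c := w x0
  have hev : ∀ᶠ x in cocompact (En n), w x < c / 2 := h0.eventually_lt_const (by linarith)
  rw [← Metric.cobounded_eq_cocompact, (Metric.hasBasis_cobounded_compl_closedBall (0 : En n)).eventually_iff] at hev
  obtain ⟨R, -, hR⟩ := hev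
  set R' := max R ‖x0‖ + 1 with hR'
  have hRpos : 0 < R' := by have := norm_nonneg x0; have := le_max_right R ‖x0‖; linarith
  set j0 : Fin n := ⟨0, hn⟩
  set η := c / (4 * R' ^ 2) with hη
  have hηpos : 0 < η := by positivity
  set ψ : En n → ℝ := fun x => η * (x j0) ^ 2 with hψ
  have hcoord : ContDiff ℝ (⊤ : ℕ∞) (fun x : En n => x j0) :=
    (EuclideanSpace.proj j0 : En n →L[ℝ] ℝ).contDiff
  have hψs : ContDiff ℝ (⊤ : ℕ∞) ψ := contDiff_const.mul (hcoord.pow 2)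
  have hfd : ∀ x : En n, HasFDerivAt (fun x : En n => x j0) (EuclideanSpace.proj j0 : En n →L[ℝ] ℝ) x :=
    fun x => (EuclideanSpace.proj j0 : En n →L[ℝ] ℝ).hasFDerivAt
  have hpd1 : ∀ j, pd j ψ = fun x => η * (2 * x j0 * (if j0 = j then 1 else 0)) := by
    intro j
    funext x
    have := (((hfd x).pow 2).const_mul η).fderiv
    unfold pd
    rw [hψ]
    rw [this]
    simp
    try (left; ring)
  have hpd2 : ∀ j x, pd j (pd j ψ) x = if j0 = j then 2 * η else 0 := by
    intro j x
    rw [hpd1]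
    by_cases hj : j0 = j
    · simp only [hj, if_true]
      have := (((hfd x).const_mul 2).const_mul η).fderiv
      unfold pd
      simp only [mul_one]
      rw [← hj, this]
      simp
      ring
    · simp [hj, pd]
  set h := w + ψ with hh
  have hhs : ContDiff ℝ (⊤ : ℕ∞) h := hw.add hψs
  obtain ⟨z, hz, hzmax⟩ := (isCompact_closedBall (0 : En n) R').exists_isMaxOn
    ⟨0, by simp [hRpos.le]⟩ hhs.continuous.continuousOn
  have hx0mem : x0 ∈ Metric.closedBall (0 : En n) R' := by
    simp only [mem_closedBall_zero_iff]
    have := le_max_right R ‖x0‖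
    linarith
  have hzc : c ≤ h z := by
    have h1 : h x0 ≤ h z := hzmax hx0mem
    have h2 : c ≤ h x0 := by
      simp only [hh, Pi.add_apply, hψ]
      have : 0 ≤ η * (x0 j0) ^ 2 := by positivity
      linarith
    linarith
  have hzin : ‖z‖ < R' := by
    by_contra! hge
    have hzeq : ‖z‖ ≤ R' := by simpa using hz
    have hwz : w z < c / 2 := by
      apply hR
      simp only [Set.mem_compl_iff, mem_closedBall_zero_iff, not_le]
      have := le_max_left R ‖x0‖
      linarith
    have hco : (z j0) ^ 2 ≤ R' ^ 2 := by
      have : |z j0| ≤ ‖z‖ := by simpa using PiLp.norm_apply_le z j0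
      rw [← sq_abs]
      exact pow_le_pow_left₀ (abs_nonneg _) (this.trans hzeq) 2
    have : ψ z ≤ c / 4 := by
      have : ψ z ≤ η * R' ^ 2 := mul_le_mul_of_nonneg_left hco hηpos.le
      have e : η * R' ^ 2 = c / 4 := by rw [hη]; field_simp
      linarith
    simp only [hh, Pi.add_apply] at hzc
    linarith
  have hloc : IsLocalMax h z := by
    refine hzmax.isLocalMax ?_
    exact Filter.mem_of_superset (Metric.isOpen_ball.mem_nhds (by simpa using hzin))
      Metric.ball_subset_closedBall
  have hsum : ∑ j, pd j (pd j h) z ≤ 0 := Finset.sum_nonpos (fun j _ => pd_pd_le_of_isLocalMax hhs hloc j)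
  have hsplit : ∀ j, pd j (pd j h) z = pd j (pd j w) z + (if j0 = j then 2 * η else 0) := by
    intro j
    rw [hh, pd_add j (smooth_diff hw) (smooth_diff hψs),
      pd_add j (smooth_diff (pd_contDiff j hw)) (smooth_diff (pd_contDiff j hψs)), Pi.add_apply, hpd2]
  simp only [hsplit, Finset.sum_add_distrib, Finset.sum_ite_eq, Finset.mem_univ, if_true] at hsum
  have := hl z
  unfold lap at this
  linarith

theorem lap_smul {u : En n → ℝ} (c : ℝ) (hu : ContDiff ℝ (⊤ : ℕ∞) u) :
    lap (c • u) = c • lap u := by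
  funext x
  simp only [lap, Pi.smul_apply, Finset.smul_sum]
  refine Finset.sum_congr rfl (fun j _ => ?_)
  rw [pd_smul j c (smooth_diff hu), pd_smul j c (smooth_diff (pd_contDiff j hu))]
  rfl

theorem harmonic_eq_zero {w : En n → ℝ} (hn : 0 < n) (hw : ContDiff ℝ (⊤ : ℕ∞) w)
    (hl : ∀ x, lap w x = 0) (h0 : Tendsto w (cocompact (En n)) (nhds 0)) : w = 0 := by
  funext x
  apply le_antisymm (harmonic_le_zero hn hw hl h0 x)
  have h1 : (-1 : ℝ) • w = fun x => - w x := by funext x; simp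
  have := harmonic_le_zero (w := (-1 : ℝ) • w) hn (contDiff_const.smul hw)
    (fun x => by rw [lap_smul _ hw]; simp [hl x]) (by rw [h1]; simpa using h0.neg) x
  simpa using this

/-- convolution -/
def cv (u ρ : En n → ℝ) : En n → ℝ := MeasureTheory.convolution u ρ (ContinuousLinearMap.lsmul ℝ ℝ) volume

theorem cv_apply (u ρ : En n → ℝ) (x : En n) : cv u ρ x = ∫ t, u t * ρ (x - t) := rfl

theorem cv_apply' (u ρ : En n → ℝ) (x : En n) : cv u ρ x = ∫ t, u (x - t) * ρ t := by
  rw [cv, MeasureTheory.convolution_eq_swap]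
  rfl

theorem pd_compactSupport {ρ : En n → ℝ} (j : Fin n) (h : HasCompactSupport ρ) :
    HasCompactSupport (pd j ρ) := h.fderiv_apply (𝕜 := ℝ) _

theorem lap_compactSupport {ρ : En n → ℝ} (h : HasCompactSupport ρ) :
    HasCompactSupport (lap ρ) := by
  refine HasCompactSupport.intro (K := ⋃ j, tsupport (pd j (pd j ρ)))
    (isCompact_iUnion (fun j => pd_compactSupport j (pd_compactSupport j h))) (fun x hx => ?_)
  simp only [Set.mem_iUnion, not_exists] at hx
  exact Finset.sum_eq_zero (fun j _ => image_eq_zero_of_notMem_tsupport (hx j))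

theorem cv_contDiff {u ρ : En n → ℝ} (hu : Continuous u) (hρ : ContDiff ℝ (⊤ : ℕ∞) ρ)
    (hc : HasCompactSupport ρ) : ContDiff ℝ (⊤ : ℕ∞) (cv u ρ) :=
  hc.contDiff_convolution_right _ hu.locallyIntegrable hρ

theorem pd_cv {u ρ : En n → ℝ} (j : Fin n) (hu : Continuous u) (hρ : ContDiff ℝ (⊤ : ℕ∞) ρ)
    (hc : HasCompactSupport ρ) : pd j (cv u ρ) = cv u (pd j ρ) := by
  funext x
  have h := hc.hasFDerivAt_convolution_right (ContinuousLinearMap.lsmul ℝ ℝ) (μ := volume)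
    hu.locallyIntegrable (hρ.of_le (by simp)) x
  unfold pd
  rw [cv, h.fderiv]
  rw [convolution_precompR_apply (L := ContinuousLinearMap.lsmul ℝ ℝ) hu.locallyIntegrable
    (hc.fderiv (𝕜 := ℝ)) (hρ.continuous_fderiv (by simp))]
  rfl

theorem cv_sum {ι : Type*} (s : Finset ι) {u : En n → ℝ} {ρ : ι → En n → ℝ} (hu : Continuous u)
    (hρ : ∀ i, Continuous (ρ i)) (hc : ∀ i, HasCompactSupport (ρ i)) (x : En n) :
    cv u (fun y => ∑ i ∈ s, ρ i y) x = ∑ i ∈ s, cv u (ρ i) x := by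
  simp only [cv_apply', Finset.mul_sum]
  rw [integral_finsetSum]
  intro i _
  refine Continuous.integrable_of_hasCompactSupport ?_ ((hc i).mul_left)
  exact (hu.comp (by fun_prop)).mul (hρ i)

theorem lap_cv {u ρ : En n → ℝ} (hu : Continuous u) (hρ : ContDiff ℝ (⊤ : ℕ∞) ρ)
    (hc : HasCompactSupport ρ) : lap (cv u ρ) = cv u (lap ρ) := by
  funext x
  change _ = cv u (fun y => ∑ j, pd j (pd j ρ) y) x
  rw [cv_sum _ hu (fun j => (pd_contDiff j (pd_contDiff j hρ)).continuous)
    (fun j => pd_compactSupport j (pd_compactSupport j hc))]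
  unfold lap
  refine Finset.sum_congr rfl (fun j _ => ?_)
  rw [pd_cv j hu hρ hc, pd_cv j hu (pd_contDiff j hρ) (pd_compactSupport j hc)]

theorem cv_pd {u ρ : En n → ℝ} (j : Fin n) (hu : ContDiff ℝ (⊤ : ℕ∞) u)
    (hρ : ContDiff ℝ (⊤ : ℕ∞) ρ) (hc : HasCompactSupport ρ) : cv (pd j u) ρ = cv u (pd j ρ) := by
  funext x
  rw [cv_apply', cv_apply']
  have hd : ∀ t, fderiv ℝ (fun t => u (x - t)) t (EuclideanSpace.single j 1) = - pd j u (x - t) := by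
    intro t
    have h1 : HasFDerivAt (fun t : En n => x - t) (-ContinuousLinearMap.id ℝ (En n)) t := by
      simpa using (hasFDerivAt_id t).const_sub x
    have h2 := ((smooth_diff hu (x - t)).hasFDerivAt).comp t h1
    have h3 := h2.fderiv
    change fderiv ℝ (u ∘ fun t => x - t) t _ = _
    rw [h3]
    simp [pd]
  have hux : Continuous (fun t => u (x - t)) := hu.continuous.comp (by fun_prop)
  have hpux : Continuous (fun t => pd j u (x - t)) := (pd_contDiff j hu).continuous.comp (by fun_prop)
  have key := integral_mul_fderiv_eq_neg_fderiv_mul_of_integrable (𝕜 := ℝ) (μ := volume)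
    (f := fun t => u (x - t)) (g := ρ) (v := EuclideanSpace.single j 1) ?_ ?_ ?_ ?_ ?_
  · change ∫ t, u (x - t) * pd j ρ t = _ at key
    rw [key, ← integral_neg]
    refine integral_congr_ae (Eventually.of_forall (fun t => ?_))
    simp only [hd]
    ring
  · simp only [hd]
    exact Continuous.integrable_of_hasCompactSupport (hpux.neg.mul hρ.continuous) hc.mul_left
  · exact Continuous.integrable_of_hasCompactSupport (hux.mul (pd_contDiff j hρ).continuous)
      (pd_compactSupport j hc).mul_left
  · exact Continuous.integrable_of_hasCompactSupport (hux.mul hρ.continuous) hc.mul_left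
  · exact fun t _ => ((smooth_diff hu).comp ((differentiable_const x).sub differentiable_id)) t
  · exact fun t _ => smooth_diff hρ t

theorem cv_sum_left {ι : Type*} (s : Finset ι) {u : ι → En n → ℝ} {ρ : En n → ℝ}
    (hu : ∀ i, Continuous (u i))
    (hρ : Continuous ρ) (hc : HasCompactSupport ρ) (x : En n) :
    cv (fun y => ∑ i ∈ s, u i y) ρ x = ∑ i ∈ s, cv (u i) ρ x := by
  simp only [cv_apply', Finset.sum_mul]
  rw [integral_finsetSum]
  intro i _
  refine Continuous.integrable_of_hasCompactSupport ?_ (hc.mul_left)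
  exact ((hu i).comp (by fun_prop)).mul hρ

theorem cv_lap {u ρ : En n → ℝ} (hu : ContDiff ℝ (⊤ : ℕ∞) u)
    (hρ : ContDiff ℝ (⊤ : ℕ∞) ρ) (hc : HasCompactSupport ρ) : cv (lap u) ρ = cv u (lap ρ) := by
  funext x
  change cv (fun y => ∑ j, pd j (pd j u) y) ρ x = cv u (fun y => ∑ j, pd j (pd j ρ) y) x
  rw [cv_sum _ hu.continuous (fun j => (pd_contDiff j (pd_contDiff j hρ)).continuous)
    (fun j => pd_compactSupport j (pd_compactSupport j hc)),
    cv_sum_left _ (fun j => (pd_contDiff j (pd_contDiff j hu)).continuous) hρ.continuous hc]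
  refine Finset.sum_congr rfl (fun j _ => ?_)
  rw [cv_pd j (pd_contDiff j hu) hρ hc, cv_pd j hu (pd_contDiff j hρ) (pd_compactSupport j hc)]

theorem cv_tendsto {u ρ : En n → ℝ} (hu : Continuous u)
    (h0 : Tendsto u (cocompact (En n)) (nhds 0)) (hρ : Continuous ρ) (hc : HasCompactSupport ρ) :
    Tendsto (cv u ρ) (cocompact (En n)) (nhds 0) := by
  obtain ⟨C, hC⟩ : ∃ C, ∀ x, ‖u x‖ ≤ C := by
    have := ZeroAtInftyContinuousMap.isBounded_range (⟨⟨u, hu⟩, h0⟩ : ZeroAtInftyContinuousMap (En n) ℝ)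
    obtain ⟨C, hC⟩ := isBounded_iff_forall_norm_le.mp this
    exact ⟨C, fun x => hC _ ⟨x, rfl⟩⟩
  have e : cv u ρ = fun x => ∫ t, u (x - t) * ρ t := funext (cv_apply' u ρ)
  rw [e]
  have : (cocompact (En n)).IsCountablyGenerated := by
    rw [← Metric.cobounded_eq_cocompact, ← comap_norm_atTop]
    infer_instance
  have : Tendsto (fun x => ∫ t, u (x - t) * ρ t) (cocompact (En n)) (nhds (∫ t : En n, (0 : ℝ))) := by
    refine tendsto_integral_filter_of_dominated_convergence (fun t => C * ‖ρ t‖) ?_ ?_ ?_ ?_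
    · refine Eventually.of_forall (fun x => ?_)
      exact ((hu.comp (by fun_prop)).mul hρ).aestronglyMeasurable
    · refine Eventually.of_forall (fun x => Eventually.of_forall (fun t => ?_))
      rw [norm_mul]
      exact mul_le_mul_of_nonneg_right (hC _) (norm_nonneg _)
    · exact ((hρ.integrable_of_hasCompactSupport hc).norm).const_mul C
    · refine Eventually.of_forall (fun t => ?_)
      have h1 : Tendsto (fun x : En n => x - t) (cocompact (En n)) (cocompact (En n)) :=
        (Homeomorph.subRight t).isClosedEmbedding.tendsto_cocompact
      simpa using (h0.comp h1).mul_const (ρ t)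
  simpa using this

theorem polyharmonic_cv {u : En n → ℝ} (hn : 0 < n) (hu : Continuous u)
    (h0 : Tendsto u (cocompact (En n)) (nhds 0)) (N : ℕ) (ρ : En n → ℝ)
    (hρ : ContDiff ℝ (⊤ : ℕ∞) ρ) (hc : HasCompactSupport ρ) (h : cv u (lap^[N] ρ) = 0) :
    cv u ρ = 0 := by
  induction N generalizing ρ with
  | zero => simpa using h
  | succ N ih =>
    rw [Function.iterate_succ_apply] at h
    have h1 := ih (lap ρ) (lap_contDiff hρ) (lap_compactSupport hc) h
    rw [← lap_cv hu hρ hc] at h1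
    exact harmonic_eq_zero hn (cv_contDiff hu hρ hc) (fun x => congrFun h1 x)
      (cv_tendsto hu h0 hρ.continuous hc)

theorem cv_lap_iter {u : En n → ℝ} (N : ℕ) {ρ : En n → ℝ} (hu : ContDiff ℝ (⊤ : ℕ∞) u)
    (hρ : ContDiff ℝ (⊤ : ℕ∞) ρ) (hc : HasCompactSupport ρ) :
    cv (lap^[N] u) ρ = cv u (lap^[N] ρ) := by
  induction N generalizing u ρ with
  | zero => rfl
  | succ N ih =>
    rw [Function.iterate_succ_apply, ih (lap_contDiff hu) hρ hc, Function.iterate_succ_apply',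
      cv_lap hu]
    · clear ih
      induction N with
      | zero => exact hρ
      | succ N ih => rw [Function.iterate_succ_apply']; exact lap_contDiff ih
    · clear ih
      induction N with
      | zero => exact hc
      | succ N ih => rw [Function.iterate_succ_apply']; exact lap_compactSupport ih

theorem polyharmonic_eq_zero {u : En n → ℝ} (hn : 0 < n) (hu : ContDiff ℝ (⊤ : ℕ∞) u)
    (h0 : Tendsto u (cocompact (En n)) (nhds 0)) (N : ℕ) (h : lap^[N] u = 0) : u = 0 := by
  have key : ∀ ρ : En n → ℝ, ContDiff ℝ (⊤ : ℕ∞) ρ → HasCompactSupport ρ → cv u ρ = 0 := by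
    intro ρ hρ hc
    apply polyharmonic_cv hn hu.continuous h0 N ρ hρ hc
    rw [← cv_lap_iter N hu hρ hc, h]
    funext x
    simp [cv_apply]
  have hae : ∀ᵐ x ∂(volume : Measure (En n)), u x = 0 := by
    apply ae_eq_zero_of_integral_contDiff_smul_eq_zero hu.continuous.locallyIntegrable
    intro g hg hgc
    have h1 := congrFun (key (fun x => g (-x)) (hg.comp contDiff_neg)
      (hgc.comp_homeomorph (Homeomorph.neg (En n)))) 0
    rw [cv_apply] at h1
    simpa [mul_comm] using h1
  exact (Continuous.ae_eq_iff_eq volume hu.continuous continuous_const).mp hae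

end Liouville

section FourierPart

open scoped FourierTransform

variable {n : ℕ}

/-- regularized multiplier families of order `s` -/
inductive Fam : ℤ → (ℝ → En n → ℂ) → Prop
  | zero (s : ℤ) : Fam s (fun _ _ => 0)
  | base (φ : SchwartzMap (En n) ℂ) : Fam 0 (fun _ => φ)
  | coord (j : Fin n) {s : ℤ} {h : ℝ → En n → ℂ} : Fam s h →
      Fam (s + 1) (fun ε ξ => ((ξ j : ℝ) : ℂ) * h ε ξ)
  | quot {s : ℤ} {h : ℝ → En n → ℂ} : Fam s h →
      Fam (s - 2) (fun ε ξ => (((‖ξ‖ ^ 2 + ε)⁻¹ : ℝ) : ℂ) * h ε ξ)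
  | add {s : ℤ} {h h' : ℝ → En n → ℂ} : Fam s h → Fam s h' → Fam s (fun ε ξ => h ε ξ + h' ε ξ)
  | smul (c : ℂ) {s : ℤ} {h : ℝ → En n → ℂ} : Fam s h → Fam s (fun ε ξ => c * h ε ξ)
  | weak {s : ℤ} {h : ℝ → En n → ℂ} : Fam s h → Fam (s - 1) h

theorem Fam.cast {s s' : ℤ} {h h' : ℝ → En n → ℂ} (H : Fam s h) (e : s = s') (e' : h = h') :
    Fam s' h' := by subst e; subst e'; exact H

theorem Fam.mono {s s' : ℤ} {h : ℝ → En n → ℂ} (H : Fam s h) (hs : s' ≤ s) : Fam s' h := by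
  obtain ⟨d, rfl⟩ : ∃ d : ℕ, s' = s - d := ⟨(s - s').toNat, by omega⟩
  clear hs
  induction d with
  | zero => simpa using H
  | succ d ih => exact ih.weak.cast (by push_cast; ring) rfl

theorem Fam.quotPow {s : ℤ} {h : ℝ → En n → ℂ} (H : Fam s h) (N : ℕ) :
    Fam (s - 2 * N) (fun ε ξ => (((‖ξ‖ ^ 2 + ε)⁻¹ ^ N : ℝ) : ℂ) * h ε ξ) := by
  induction N with
  | zero => simpa using H
  | succ N ih =>
    refine ih.quot.cast (by push_cast; ring) ?_
    funext ε ξ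
    push_cast
    ring

theorem Fam.measurable {s : ℤ} {h : ℝ → En n → ℂ} (H : Fam s h) (ε : ℝ) : Measurable (h ε) := by
  induction H with
  | zero s => exact measurable_const
  | base φ => exact φ.continuous.measurable
  | coord j _ ih =>
    refine Measurable.mul ?_ ih
    exact (Complex.continuous_ofReal.comp (EuclideanSpace.proj j : En n →L[ℝ] ℝ).continuous).measurable
  | quot _ ih =>
    refine Measurable.mul ?_ ih
    refine Complex.measurable_ofReal.comp (Measurable.inv ?_)
    exact (by fun_prop : Continuous (fun ξ : En n => ‖ξ‖ ^ 2 + ε)).measurable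
  | add _ _ ih1 ih2 => exact ih1.add ih2
  | smul c _ ih => exact measurable_const.mul ih
  | weak _ ih => exact ih

theorem Fam.lim {s : ℤ} {h : ℝ → En n → ℂ} (H : Fam s h) {ξ : En n} (hξ : ξ ≠ 0) :
    Tendsto (fun ε => h ε ξ) (nhds 0) (nhds (h 0 ξ)) := by
  induction H with
  | zero s => exact tendsto_const_nhds
  | base φ => exact tendsto_const_nhds
  | coord j _ ih => exact ih.const_mul _
  | quot _ ih =>
    refine Tendsto.mul ?_ ih
    refine (Complex.continuous_ofReal.tendsto _).comp ?_
    have : (‖ξ‖ ^ 2 + 0) ≠ 0 := by simpa using hξ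
    exact Tendsto.inv₀ (tendsto_const_nhds.add tendsto_id) this
  | add _ _ ih1 ih2 => exact ih1.add ih2
  | smul c _ ih => exact ih.const_mul _
  | weak _ ih => exact ih

theorem Fam.bound {s : ℤ} {h : ℝ → En n → ℂ} (H : Fam s h) (M : ℕ) :
    ∃ C : ℝ, 0 ≤ C ∧ ∀ ε : ℝ, 0 ≤ ε → ∀ ξ : En n, ξ ≠ 0 →
      (1 + ‖ξ‖) ^ M * ‖h ε ξ‖ ≤ C * ‖ξ‖ ^ s := by
  induction H generalizing M with
  | zero s => exact ⟨0, le_rfl, fun ε _ ξ _ => by simp⟩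
  | base φ =>
    refine ⟨2 ^ M * ((Finset.Iic (M, 0)).sup fun m => SchwartzMap.seminorm ℝ m.1 m.2) φ, ?_,
      fun ε _ ξ _ => ?_⟩
    · positivity
    · have := SchwartzMap.one_add_le_sup_seminorm_apply (𝕜 := ℝ) (m := (M, 0)) le_rfl le_rfl φ ξ
      simpa using this
  | @coord j s h _ ih =>
    obtain ⟨C, hC0, hC⟩ := ih M
    refine ⟨C, hC0, fun ε hε ξ hξ => ?_⟩
    have h1 := hC ε hε ξ hξ
    have h2 : |ξ j| ≤ ‖ξ‖ := by simpa using PiLp.norm_apply_le ξ j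
    have hp : 0 < ‖ξ‖ := norm_pos_iff.2 hξ
    rw [zpow_add_one₀ hp.ne', norm_mul, Complex.norm_real, Real.norm_eq_abs]
    calc (1 + ‖ξ‖) ^ M * (|ξ j| * ‖h ε ξ‖) = ((1 + ‖ξ‖) ^ M * ‖h ε ξ‖) * |ξ j| := by ring
      _ ≤ (C * ‖ξ‖ ^ s) * ‖ξ‖ := by gcongr
      _ = _ := by ring
  | @quot s h _ ih =>
    obtain ⟨C, hC0, hC⟩ := ih M
    refine ⟨C, hC0, fun ε hε ξ hξ => ?_⟩
    have h1 := hC ε hε ξ hξ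
    have hp : 0 < ‖ξ‖ := norm_pos_iff.2 hξ
    have h2 : |(‖ξ‖ ^ 2 + ε)⁻¹| ≤ (‖ξ‖ ^ 2)⁻¹ := by
      rw [abs_of_nonneg (by positivity)]
      exact inv_anti₀ (by positivity) (by linarith)
    rw [zpow_sub₀ hp.ne', norm_mul, Complex.norm_real, Real.norm_eq_abs]
    calc (1 + ‖ξ‖) ^ M * (|(‖ξ‖ ^ 2 + ε)⁻¹| * ‖h ε ξ‖)
        = ((1 + ‖ξ‖) ^ M * ‖h ε ξ‖) * |(‖ξ‖ ^ 2 + ε)⁻¹| := by ring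
      _ ≤ (C * ‖ξ‖ ^ s) * (‖ξ‖ ^ 2)⁻¹ := by gcongr
      _ = _ := by rw [div_eq_mul_inv, mul_assoc]; norm_cast
  | add _ _ ih1 ih2 =>
    obtain ⟨C, hC0, hC⟩ := ih1 M
    obtain ⟨C', hC0', hC'⟩ := ih2 M
    refine ⟨C + C', add_nonneg hC0 hC0', fun ε hε ξ hξ => ?_⟩
    have h1 := hC ε hε ξ hξ
    have h2 := hC' ε hε ξ hξ
    calc _ ≤ (1 + ‖ξ‖) ^ M * (_ + _) := by gcongr; exact norm_add_le _ _
      _ ≤ _ := by rw [mul_add, add_mul]; exact add_le_add h1 h2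
  | smul c _ ih =>
    obtain ⟨C, hC0, hC⟩ := ih M
    refine ⟨‖c‖ * C, by positivity, fun ε hε ξ hξ => ?_⟩
    have h1 := hC ε hε ξ hξ
    rw [norm_mul, mul_left_comm, mul_assoc]
    gcongr
  | @weak s h _ ih =>
    obtain ⟨C, hC0, hC⟩ := ih (M + 1)
    refine ⟨C, hC0, fun ε hε ξ hξ => ?_⟩
    have h1 := hC ε hε ξ hξ
    have hp : 0 < ‖ξ‖ := norm_pos_iff.2 hξ
    rw [zpow_sub_one₀ hp.ne', ← mul_assoc, ← div_eq_mul_inv, le_div_iff₀ hp]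
    refine le_trans ?_ h1
    calc (1 + ‖ξ‖) ^ M * ‖h ε ξ‖ * ‖ξ‖ ≤ (1 + ‖ξ‖) ^ M * ‖h ε ξ‖ * (1 + ‖ξ‖) := by
          gcongr; linarith
      _ = _ := by ring

theorem Fam.diff {s : ℤ} {h : ℝ → En n → ℂ} (H : Fam s h) :
    (∀ ε, 0 < ε → Differentiable ℝ (h ε)) ∧ ∀ j : Fin n, ∃ h' : ℝ → En n → ℂ, Fam (s - 1) h' ∧
      ∀ ε, 0 < ε → ∀ ξ, fderiv ℝ (h ε) ξ (EuclideanSpace.single j 1) = h' ε ξ := by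
  induction H with
  | zero s =>
    exact ⟨fun _ _ => differentiable_const _, fun j => ⟨_, Fam.zero _, fun ε _ ξ => by simp⟩⟩
  | base φ =>
    refine ⟨fun _ _ => φ.differentiable, fun j => ?_⟩
    refine ⟨_, (Fam.base (LineDeriv.lineDerivOp (EuclideanSpace.single j (1 : ℝ)) φ)).weak, ?_⟩
    intro ε _ ξ
    rw [SchwartzMap.lineDerivOp_apply, φ.differentiableAt.lineDeriv_eq_fderiv]
  | @coord i s h H ih =>
    have hfd : ∀ ξ : En n, HasFDerivAt (fun ξ : En n => ((ξ i : ℝ) : ℂ))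
        (Complex.ofRealCLM ∘L (EuclideanSpace.proj i : En n →L[ℝ] ℝ)) ξ :=
      fun ξ => (Complex.ofRealCLM ∘L (EuclideanSpace.proj i : En n →L[ℝ] ℝ)).hasFDerivAt
    refine ⟨fun ε hε ξ => (hfd ξ).differentiableAt.mul (ih.1 ε hε ξ), fun j => ?_⟩
    obtain ⟨h', H', e⟩ := ih.2 j
    refine ⟨_, (((H'.coord i).cast (s' := s) (by ring) rfl).add
      (H.smul (if i = j then 1 else 0))).cast (by ring) rfl, ?_⟩
    intro ε hε ξ
    have := ((hfd ξ).mul (ih.1 ε hε ξ).hasFDerivAt).fderiv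
    erw [this]
    simp [e ε hε ξ]
    by_cases hij : i = j <;> simp [hij]
  | @quot s h H ih =>
    have hfd : ∀ (ε : ℝ) (_ : 0 < ε) (ξ : En n),
        HasFDerivAt (fun ξ : En n => (((‖ξ‖ ^ 2 + ε)⁻¹ : ℝ) : ℂ))
        (Complex.ofRealCLM ∘L ((-((‖ξ‖ ^ 2 + ε) ^ 2)⁻¹) • ((2 : ℝ) • innerSL ℝ ξ))) ξ := by
      intro ε hε ξ
      have h1 : HasFDerivAt (fun ξ : En n => ‖ξ‖ ^ 2 + ε) ((2 : ℝ) • innerSL ℝ ξ) ξ :=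
        by simpa [two_smul] using ((hasStrictFDerivAt_norm_sq ξ).hasFDerivAt).add_const ε
      have h2 := (hasDerivAt_inv (x := ‖ξ‖ ^ 2 + ε) (by positivity)).comp_hasFDerivAt ξ h1
      exact Complex.ofRealCLM.hasFDerivAt.comp ξ h2
    refine ⟨fun ε hε ξ => (hfd ε hε ξ).differentiableAt.mul (ih.1 ε hε ξ), fun j => ?_⟩
    obtain ⟨h', H', e⟩ := ih.2 j
    refine ⟨_, (H'.quot.add ((((H.coord j).quot).quot.smul (-2)).cast (s' := s - 1 - 2)
      (by ring) rfl)).cast (by ring) rfl, ?_⟩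
    intro ε hε ξ
    have := ((hfd ε hε ξ).mul (ih.1 ε hε ξ).hasFDerivAt).fderiv
    erw [this]
    simp [e ε hε ξ, EuclideanSpace.inner_single_right]
    rw [← inv_pow]
    ring
  | @add s h1 h2 H1 H2 ih1 ih2 =>
    refine ⟨fun ε hε => (ih1.1 ε hε).add (ih2.1 ε hε), fun j => ?_⟩
    obtain ⟨h', H', e⟩ := ih1.2 j
    obtain ⟨h'', H'', e'⟩ := ih2.2 j
    refine ⟨_, H'.add H'', ?_⟩
    intro ε hε ξ
    have := ((ih1.1 ε hε ξ).hasFDerivAt.add (ih2.1 ε hε ξ).hasFDerivAt).fderiv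
    erw [this]
    simp [e ε hε ξ, e' ε hε ξ]
  | @smul c s h H ih =>
    refine ⟨fun ε hε => (ih.1 ε hε).const_mul c, fun j => ?_⟩
    obtain ⟨h', H', e⟩ := ih.2 j
    refine ⟨_, H'.smul c, ?_⟩
    intro ε hε ξ
    have := ((ih.1 ε hε ξ).hasFDerivAt.const_mul c).fderiv
    erw [this]
    simp [e ε hε ξ]
  | @weak s h H ih =>
    refine ⟨ih.1, fun j => ?_⟩
    obtain ⟨h', H', e⟩ := ih.2 j
    exact ⟨h', H'.weak, e⟩

end FourierPart

section FourierPart2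

open scoped FourierTransform

variable {n : ℕ}

/-- dominating function -/
def dom (n : ℕ) (ξ : En n) : ℝ := ‖ξ‖ ^ (-((n : ℤ) - 1)) * (1 + ‖ξ‖ ^ 2)⁻¹

theorem dom_integrable (hn : 0 < n) : Integrable (dom n) := by
  have : Nonempty (Fin n) := ⟨⟨0, hn⟩⟩
  have : Nontrivial (En n) := inferInstance
  have h := (integrable_fun_norm_addHaar (volume : Measure (En n))
    (f := fun y : ℝ => y ^ (-((n : ℤ) - 1)) * (1 + y ^ 2)⁻¹)).2 ?_
  · exact h
  · refine (integrable_inv_one_add_sq.integrableOn).congr_fun (f := fun y : ℝ => (1 + y ^ 2)⁻¹) ?_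
      measurableSet_Ioi
    intro y hy
    have hy : 0 < y := hy
    simp only [finrank_euclideanSpace, Fintype.card_fin, smul_eq_mul]
    have e : y ^ (n - 1) = y ^ ((n : ℤ) - 1) := by
      rw [← zpow_natCast]
      congr 1
      omega
    rw [e, ← mul_assoc, ← zpow_add₀ hy.ne']
    simp

theorem dom_nonneg (ξ : En n) : 0 ≤ dom n ξ := by unfold dom; positivity

theorem ae_ne_zero (hn : 0 < n) : ∀ᵐ ξ : En n, ξ ≠ 0 := by
  have : Nonempty (Fin n) := ⟨⟨0, hn⟩⟩
  have : Nontrivial (En n) := inferInstance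
  exact Measure.ae_ne volume 0

theorem Fam.le_dom {s : ℤ} {h : ℝ → En n → ℂ} (H : Fam s h) (hs : -((n : ℤ) - 1) ≤ s) (m : ℕ) :
    ∃ C : ℝ, 0 ≤ C ∧ ∀ ε : ℝ, 0 ≤ ε → ∀ ξ : En n, ξ ≠ 0 →
      ‖ξ‖ ^ m * ‖h ε ξ‖ ≤ C * dom n ξ := by
  obtain ⟨C, hC0, hC⟩ := (H.mono hs).bound (m + 2)
  refine ⟨C, hC0, fun ε hε ξ hξ => ?_⟩
  have h1 := hC ε hε ξ hξ
  unfold dom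
  rw [← mul_assoc, ← div_eq_mul_inv, le_div_iff₀ (by positivity)]
  refine le_trans ?_ h1
  have a1 : ‖ξ‖ ^ m ≤ (1 + ‖ξ‖) ^ m := by gcongr; linarith
  have a2 : 1 + ‖ξ‖ ^ 2 ≤ (1 + ‖ξ‖) ^ 2 := by nlinarith [norm_nonneg ξ]
  calc ‖ξ‖ ^ m * ‖h ε ξ‖ * (1 + ‖ξ‖ ^ 2)
      ≤ (1 + ‖ξ‖) ^ m * ‖h ε ξ‖ * (1 + ‖ξ‖) ^ 2 := by gcongr
    _ = _ := by ring

theorem Fam.integrable_pow {s : ℤ} {h : ℝ → En n → ℂ} (hn : 0 < n) (H : Fam s h)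
    (hs : -((n : ℤ) - 1) ≤ s) (m : ℕ) {ε : ℝ} (hε : 0 ≤ ε) :
    Integrable (fun ξ => ‖ξ‖ ^ m * ‖h ε ξ‖) := by
  obtain ⟨C, hC0, hC⟩ := H.le_dom hs m
  refine ((dom_integrable hn).const_mul C).mono' ?_ ?_
  · have := (H.measurable ε).norm
    exact ((continuous_norm.pow m).measurable.mul this).aestronglyMeasurable
  · filter_upwards [ae_ne_zero hn] with ξ hξ
    rw [Real.norm_of_nonneg (by positivity)]
    exact hC ε hε ξ hξ

theorem Fam.integrable {s : ℤ} {h : ℝ → En n → ℂ} (hn : 0 < n) (H : Fam s h)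
    (hs : -((n : ℤ) - 1) ≤ s) {ε : ℝ} (hε : 0 ≤ ε) : Integrable (h ε) := by
  have := H.integrable_pow hn hs 0 hε
  simp only [pow_zero, one_mul] at this
  exact (integrable_norm_iff (H.measurable ε).aestronglyMeasurable).1 this

theorem Fam.fourier_bound0 {s : ℤ} {h : ℝ → En n → ℂ} (hn : 0 < n) (H : Fam s h)
    (hs : -((n : ℤ) - 1) ≤ s) : ∃ C : ℝ, 0 ≤ C ∧ ∀ ε, 0 ≤ ε → ∀ x, ‖𝓕⁻ (h ε) x‖ ≤ C := by
  obtain ⟨C, hC0, hC⟩ := H.le_dom hs 0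
  refine ⟨∫ ξ, C * dom n ξ, integral_nonneg (fun ξ => mul_nonneg hC0 (dom_nonneg ξ)), ?_⟩
  intro ε hε x
  rw [Real.fourierInv_eq']
  refine norm_integral_le_of_norm_le ((dom_integrable hn).const_mul C) ?_
  filter_upwards [ae_ne_zero hn] with ξ hξ
  rw [norm_smul, Complex.norm_exp_ofReal_mul_I]
  simpa using hC ε hε ξ hξ

theorem hasFDerivAt_phase (x ξ : En n) :
    HasFDerivAt (fun ξ : En n => Complex.exp (((2 * Real.pi * ⟪ξ, x⟫ : ℝ) : ℂ) * Complex.I))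
      (Complex.exp (((2 * Real.pi * ⟪ξ, x⟫ : ℝ) : ℂ) * Complex.I) •
        ((2 * Real.pi * Complex.I : ℂ) • (Complex.ofRealCLM ∘L innerSL ℝ x))) ξ := by
  have h1 : HasFDerivAt (fun ξ : En n => ((2 * Real.pi * ⟪ξ, x⟫ : ℝ) : ℂ) * Complex.I)
      ((2 * Real.pi * Complex.I : ℂ) • (Complex.ofRealCLM ∘L innerSL ℝ x)) ξ := by
    have h2 := ((Complex.ofRealCLM ∘L innerSL ℝ x).hasFDerivAt (x := ξ)).const_mul (2 * Real.pi * Complex.I : ℂ)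
    refine h2.congr_of_eventuallyEq (Eventually.of_forall (fun y => ?_))
    simp [real_inner_comm]
    ring
  exact h1.cexp

theorem Fam.fourier_pd {s : ℤ} {h h' : ℝ → En n → ℂ} (hn : 0 < n) (H : Fam s h)
    (H' : Fam (s - 1) h') (hs : -((n : ℤ) - 1) ≤ s - 1) (j : Fin n) {ε : ℝ} (hε : 0 < ε)
    (e : ∀ ξ, fderiv ℝ (h ε) ξ (EuclideanSpace.single j 1) = h' ε ξ) (x : En n) :
    𝓕⁻ (h' ε) x = -(2 * Real.pi * Complex.I * ((x j : ℝ) : ℂ)) * 𝓕⁻ (h ε) x := by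
  have hph : ∀ ξ : En n, ‖Complex.exp (((2 * Real.pi * ⟪ξ, x⟫ : ℝ) : ℂ) * Complex.I)‖ = 1 :=
    fun ξ => Complex.norm_exp_ofReal_mul_I _
  have hcont : Continuous (fun ξ : En n => Complex.exp (((2 * Real.pi * ⟪ξ, x⟫ : ℝ) : ℂ) * Complex.I)) :=
    continuous_iff_continuousAt.2 (fun ξ => (hasFDerivAt_phase x ξ).continuousAt)
  have hFint : ∀ g : En n → ℂ, Integrable g →
      Integrable (fun ξ => Complex.exp (((2 * Real.pi * ⟪ξ, x⟫ : ℝ) : ℂ) * Complex.I) * g ξ) := by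
    intro g hg
    refine hg.bdd_mul (c := 1) hcont.aestronglyMeasurable (Eventually.of_forall (fun ξ => (hph ξ).le))
  have hfd : ∀ ξ, fderiv ℝ (fun ξ : En n => Complex.exp (((2 * Real.pi * ⟪ξ, x⟫ : ℝ) : ℂ) * Complex.I)) ξ
      (EuclideanSpace.single j 1) = (2 * Real.pi * Complex.I * ((x j : ℝ) : ℂ)) *
        Complex.exp (((2 * Real.pi * ⟪ξ, x⟫ : ℝ) : ℂ) * Complex.I) := by
    intro ξ
    rw [(hasFDerivAt_phase x ξ).fderiv]
    simp [EuclideanSpace.inner_single_right]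
    ring
  have key := integral_mul_fderiv_eq_neg_fderiv_mul_of_integrable (𝕜 := ℂ) (μ := volume)
    (f := fun ξ : En n => Complex.exp (((2 * Real.pi * ⟪ξ, x⟫ : ℝ) : ℂ) * Complex.I))
    (g := h ε) (v := EuclideanSpace.single j 1) ?_ ?_ ?_ ?_ ?_
  · rw [Real.fourierInv_eq', Real.fourierInv_eq']
    simp only [smul_eq_mul]
    simp only [e, hfd] at key
    rw [key, neg_mul, ← integral_const_mul]
    simp only [mul_assoc]
  · refine ((hFint _ (H.integrable hn (by linarith) hε.le)).const_mul
      (2 * Real.pi * Complex.I * ((x j : ℝ) : ℂ))).congr (Eventually.of_forall (fun ξ => ?_))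
    beta_reduce
    rw [hfd, mul_assoc _ (Complex.exp _)]
  · simp only [e]
    exact hFint _ (H'.integrable hn hs hε.le)
  · exact hFint _ (H.integrable hn (by linarith) hε.le)
  · exact fun ξ _ => (hasFDerivAt_phase x ξ).differentiableAt
  · exact fun ξ _ => H.diff.1 ε hε ξ

theorem Fam.fourier_bound1 (hn : 0 < n) (j : Fin n) (r : ℕ) {s : ℤ} {h : ℝ → En n → ℂ} (H : Fam s h)
    (hs : -((n : ℤ) - 1) ≤ s - r) :
    ∃ C : ℝ, 0 ≤ C ∧ ∀ ε, 0 < ε → ∀ x : En n, |x j| ^ r * ‖𝓕⁻ (h ε) x‖ ≤ C := by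
  induction r generalizing s h with
  | zero =>
    obtain ⟨C, hC0, hC⟩ := H.fourier_bound0 hn (by simpa using hs)
    exact ⟨C, hC0, fun ε hε x => by simpa using hC ε hε.le x⟩
  | succ r ih =>
    obtain ⟨h', H', e⟩ := H.diff.2 j
    push_cast at hs
    obtain ⟨C, hC0, hC⟩ := ih H' (by linarith)
    refine ⟨C, hC0, fun ε hε x => ?_⟩
    have h1 := hC ε hε x
    rw [H.fourier_pd hn H' (by have : (0:ℤ) ≤ r := by positivity
                               linarith) j hε (e ε hε) x] at h1
    rw [norm_mul, norm_neg, norm_mul, norm_mul, norm_mul, Complex.norm_real, Complex.norm_real,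
      Complex.norm_I, Real.norm_eq_abs, Real.norm_eq_abs, abs_of_pos Real.pi_pos] at h1
    have h2 : |x j| ^ (r + 1) * ‖𝓕⁻ (h ε) x‖ * 1 ≤ |x j| ^ (r + 1) * ‖𝓕⁻ (h ε) x‖ * (2 * Real.pi) := by
      gcongr
      linarith [Real.pi_gt_three]
    have h3 : |x j| ^ r * (‖(2 : ℂ)‖ * Real.pi * 1 * |x j| * ‖𝓕⁻ (h ε) x‖) =
      |x j| ^ (r + 1) * ‖𝓕⁻ (h ε) x‖ * (2 * Real.pi) := by
      simp; ring
    linarith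

theorem Fam.fourier_lim {s : ℤ} {h : ℝ → En n → ℂ} (hn : 0 < n) (H : Fam s h)
    (hs : -((n : ℤ) - 1) ≤ s) (x : En n) :
    Tendsto (fun ε => 𝓕⁻ (h ε) x) (nhdsWithin 0 (Set.Ioi 0)) (nhds (𝓕⁻ (h 0) x)) := by
  obtain ⟨C, hC0, hC⟩ := H.le_dom hs 0
  simp only [Real.fourierInv_eq']
  have hcont : Continuous (fun ξ : En n => Complex.exp (((2 * Real.pi * ⟪ξ, x⟫ : ℝ) : ℂ) * Complex.I)) :=
    continuous_iff_continuousAt.2 (fun ξ => (hasFDerivAt_phase x ξ).continuousAt)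
  refine tendsto_integral_filter_of_dominated_convergence (fun ξ => C * dom n ξ) ?_ ?_
    ((dom_integrable hn).const_mul C) ?_
  · exact Eventually.of_forall (fun ε => (hcont.measurable.smul (H.measurable ε)).aestronglyMeasurable)
  · filter_upwards [self_mem_nhdsWithin] with ε hε
    filter_upwards [ae_ne_zero hn] with ξ hξ
    rw [norm_smul, Complex.norm_exp_ofReal_mul_I]
    simpa using hC ε (le_of_lt hε) ξ hξ
  · filter_upwards [ae_ne_zero hn] with ξ hξ
    exact ((H.lim hξ).mono_left nhdsWithin_le_nhds).const_smul _

theorem Fam.fourier_bound2 (hn : 0 < n) (r : ℕ) {s : ℤ} {h : ℝ → En n → ℂ} (H : Fam s h)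
    (hs : -((n : ℤ) - 1) ≤ s - r) :
    ∃ C : ℝ, 0 ≤ C ∧ ∀ x : En n, (1 + ‖x‖) ^ r * ‖𝓕⁻ (h 0) x‖ ≤ C := by
  have hs0 : -((n : ℤ) - 1) ≤ s := by have : (0:ℤ) ≤ r := by positivity
                                      linarith
  have hj : ∀ j, ∃ C : ℝ, 0 ≤ C ∧ ∀ x : En n, |x j| ^ r * ‖𝓕⁻ (h 0) x‖ ≤ C := by
    intro j
    obtain ⟨C, hC0, hC⟩ := H.fourier_bound1 hn j r hs
    refine ⟨C, hC0, fun x => ?_⟩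
    refine le_of_tendsto ((H.fourier_lim hn hs0 x).norm.const_mul (|x j| ^ r)) ?_
    filter_upwards [self_mem_nhdsWithin] with ε hε using hC ε hε x
  choose C hC0 hC using hj
  obtain ⟨C', hC0', hC'⟩ := H.fourier_bound0 hn hs0
  have : Nonempty (Fin n) := ⟨⟨0, hn⟩⟩
  refine ⟨2 ^ (r - 1) * (C' + n ^ r * ∑ j, C j), ?_, fun x => ?_⟩
  · have := Finset.sum_nonneg (fun j (_ : j ∈ Finset.univ) => hC0 j)
    positivity
  · obtain ⟨j, hjm⟩ := Finite.exists_max (fun j => |x j|)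
    have hnorm : ‖x‖ ≤ n * |x j| := by
      have h1 : ‖x‖ ≤ ∑ i, |x i| := by
        have hx : x = ∑ i, EuclideanSpace.single i (x i) := by
          ext t
          simp [Finset.sum_apply]
        calc ‖x‖ = ‖∑ i, EuclideanSpace.single i (x i)‖ := by rw [← hx]
          _ ≤ ∑ i, ‖EuclideanSpace.single i (x i)‖ := norm_sum_le _ _
          _ = _ := by simp
      refine h1.trans ?_
      calc ∑ i, |x i| ≤ ∑ i : Fin n, |x j| := Finset.sum_le_sum (fun i _ => hjm i)
        _ = _ := by simp
    have hpow : (1 + ‖x‖) ^ r ≤ 2 ^ (r - 1) * (1 + n ^ r * |x j| ^ r) := by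
      refine (add_pow_le zero_le_one (norm_nonneg x) r).trans ?_
      rw [one_pow, ← mul_pow]
      gcongr
    calc (1 + ‖x‖) ^ r * ‖𝓕⁻ (h 0) x‖
        ≤ 2 ^ (r - 1) * (1 + n ^ r * |x j| ^ r) * ‖𝓕⁻ (h 0) x‖ := by gcongr
      _ = 2 ^ (r - 1) * (‖𝓕⁻ (h 0) x‖ + n ^ r * (|x j| ^ r * ‖𝓕⁻ (h 0) x‖)) := by ring
      _ ≤ _ := by
        gcongr
        · exact hC' 0 le_rfl x
        · exact (hC j x).trans (Finset.single_le_sum (fun j _ => hC0 j) (Finset.mem_univ j))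

end FourierPart2

section FourierPart3

open scoped FourierTransform

variable {n : ℕ}

theorem fourierInv_contDiff {g : En n → ℂ} (hg : ∀ m : ℕ, Integrable (fun ξ => ‖ξ‖ ^ m * ‖g ξ‖)) :
    ContDiff ℝ (⊤ : ℕ∞) (𝓕⁻ g) := by
  have h1 : ContDiff ℝ (⊤ : ℕ∞) (𝓕 g) := Real.contDiff_fourier (fun m _ => hg m)
  have e : 𝓕⁻ g = fun x => 𝓕 g (-x) := funext (Real.fourierInv_eq_fourier_neg g)
  rw [e]
  exact h1.comp contDiff_neg

theorem fourierInv_fderiv {g : En n → ℂ} (hg : Integrable g)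
    (hg1 : Integrable (fun ξ => ‖ξ‖ * ‖g ξ‖)) (x : En n) (j : Fin n) :
    fderiv ℝ (𝓕⁻ g) x (EuclideanSpace.single j 1) =
      𝓕⁻ (fun ξ : En n => 2 * Real.pi * Complex.I * (((ξ j : ℝ) : ℂ) * g ξ)) x := by
  have e : 𝓕⁻ g = fun x => 𝓕 g (-x) := funext (Real.fourierInv_eq_fourier_neg g)
  have h1 := Real.hasFDerivAt_fourier hg hg1 (-x)
  have h2 : HasFDerivAt (fun x : En n => -x) (-ContinuousLinearMap.id ℝ (En n)) x :=
    (hasFDerivAt_id x).neg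
  have h3 := h1.comp x h2
  have hI : Integrable (VectorFourier.fourierSMulRight (innerSL ℝ) g) := by
    refine (hg1.const_mul (2 * Real.pi * ‖innerSL (E := En n) ℝ‖)).mono' ?_ ?_
    · exact hg.1.fourierSMulRight
    · refine Eventually.of_forall (fun ξ => ?_)
      exact (VectorFourier.norm_fourierSMulRight_le _ _ _).trans (le_of_eq (by ring))
  rw [e]
  erw [h3.fderiv]
  simp only [ContinuousLinearMap.comp_apply, neg_apply,
    ContinuousLinearMap.id_apply, map_neg]
  rw [Real.fourier_continuousLinearMap_apply hI, Real.fourierInv_eq_fourier_neg, Real.fourier_eq',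
    Real.fourier_eq', ← integral_neg]
  refine integral_congr_ae (Eventually.of_forall (fun ξ => ?_))
  simp [EuclideanSpace.inner_single_right]
  left
  change inner ℝ ξ (EuclideanSpace.single j (1 : ℝ)) = _
  simp [EuclideanSpace.inner_single_right]

theorem fourierInv_tendsto (g : En n → ℂ) : Tendsto (𝓕⁻ g) (cocompact (En n)) (nhds 0) := by
  have h := tendsto_integral_exp_inner_smul_cocompact g
  have e : 𝓕⁻ g = fun x => 𝓕 g (-x) := funext (Real.fourierInv_eq_fourier_neg g)
  rw [e]
  exact Tendsto.comp (g := 𝓕 g) h (Homeomorph.neg (En n)).isClosedEmbedding.tendsto_cocompact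

/-- the space of smooth functions -/
def SmV (n : ℕ) : Submodule ℝ (En n → ℝ) where
  carrier := {u | ContDiff ℝ (⊤ : ℕ∞) u}
  add_mem' := by
    intro a b ha hb
    exact ContDiff.add (show ContDiff ℝ (⊤ : ℕ∞) a from ha) hb
  zero_mem' := by
    show ContDiff ℝ (⊤ : ℕ∞) (fun _ : En n => (0 : ℝ))
    exact contDiff_const
  smul_mem' := by
    intro c u hu
    exact ContDiff.const_smul c (show ContDiff ℝ (⊤ : ℕ∞) u from hu)

/-- partial derivatives on smooth functions -/
def DV (j : Fin n) : SmV n →ₗ[ℝ] SmV n where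
  toFun u := ⟨pd j u.1, pd_contDiff j u.2⟩
  map_add' u v := Subtype.ext (pd_add j (smooth_diff u.2) (smooth_diff v.2))
  map_smul' c u := Subtype.ext (pd_smul j c (smooth_diff u.2))

theorem DV_coe (j : Fin n) (u : SmV n) : (DV j u).1 = pd j u.1 := rfl

theorem DV_comm (i j : Fin n) (u : SmV n) : DV i (DV j u) = DV j (DV i u) :=
  Subtype.ext (pd_comm i j u.2)

/-- complexification -/
def cx (u : En n → ℝ) : En n → ℂ := fun x => (u x : ℂ)

/-- Schwartz functions whose Fourier transform vanishes to order `a` at the origin -/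
def WV (n : ℕ) (a : ℕ) : Submodule ℝ (SmV n) where
  carrier := {u | ∃ Φ : SchwartzMap (En n) ℂ, (⇑Φ = cx u.1) ∧ Fam (a : ℤ) (fun _ => ⇑(𝓕 Φ : SchwartzMap (En n) ℂ))}
  add_mem' := by
    rintro u v ⟨Φ, h1, h2⟩ ⟨Ψ, h3, h4⟩
    refine ⟨Φ + Ψ, ?_, (h2.add h4).cast rfl ?_⟩
    · funext x
      simp [h1, h3, cx]
    · funext ε ξ
      simp [FourierTransform.fourier_add]
  zero_mem' := by
    refine ⟨0, ?_, (Fam.zero _).cast rfl ?_⟩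
    · funext x
      simp [cx]
    · funext ε ξ
      have : 𝓕 (0 : SchwartzMap (En n) ℂ) = 0 := FourierTransform.fourier_zero
      simp [this]
  smul_mem' := by
    rintro c u ⟨Φ, h1, h2⟩
    refine ⟨(c : ℂ) • Φ, ?_, (h2.smul c).cast rfl ?_⟩
    · funext x
      simp [h1, cx]
    · funext ε ξ
      simp [FourierTransform.fourier_smul]

theorem pd_schwartz {u : En n → ℝ} (hu : Differentiable ℝ u) (Φ : SchwartzMap (En n) ℂ)
    (h : ⇑Φ = cx u) (j : Fin n) :
    ⇑(LineDeriv.lineDerivOp (EuclideanSpace.single j (1 : ℝ)) Φ) = cx (pd j u) := by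
  funext x
  rw [SchwartzMap.lineDerivOp_apply, Φ.differentiableAt.lineDeriv_eq_fderiv, h]
  have h1 := (Complex.ofRealCLM.hasFDerivAt (x := u x)).comp x (hu x).hasFDerivAt
  have h2 := h1.fderiv
  change fderiv ℝ (Complex.ofRealCLM ∘ u) x _ = _
  rw [h2]
  rfl

theorem fourier_pd_schwartz (Φ : SchwartzMap (En n) ℂ) (j : Fin n) (ξ : En n) :
    𝓕 (LineDeriv.lineDerivOp (EuclideanSpace.single j (1 : ℝ)) Φ) ξ =
      2 * Real.pi * Complex.I * (((ξ j : ℝ) : ℂ) * 𝓕 Φ ξ) := by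
  rw [SchwartzMap.fourier_lineDerivOp_eq, smul_apply, SchwartzMap.smulLeftCLM_apply_apply (by fun_prop)]
  simp [EuclideanSpace.inner_single_right]

theorem WV_DV (a : ℕ) (j : Fin n) (u : SmV n) (hu : u ∈ WV n a) : DV j u ∈ WV n (a + 1) := by
  obtain ⟨Φ, h1, h2⟩ := hu
  refine ⟨_, pd_schwartz (smooth_diff u.2) Φ h1 j, ((h2.coord j).smul (2 * Real.pi * Complex.I)).cast
    (by push_cast; rfl) ?_⟩
  funext ε ξ
  exact (fourier_pd_schwartz Φ j ξ).symm

theorem WV_zero (u : SmV n) (φ : SchwartzMap (En n) ℝ) (h : ⇑φ = u.1) : u ∈ WV n 0 := by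
  refine ⟨SchwartzMap.postcompCLM (𝕜 := ℝ) Complex.ofRealCLM φ, ?_, Fam.base _⟩
  funext x
  simp [← h, cx]

theorem WV_anti {a b : ℕ} (hab : a ≤ b) (u : SmV n) (hu : u ∈ WV n b) : u ∈ WV n a := by
  obtain ⟨Φ, h1, h2⟩ := hu
  exact ⟨Φ, h1, h2.mono (by exact_mod_cast hab)⟩

/-- the multiplier function -/
def mlt (N : ℕ) (u : En n → ℝ) : En n → ℂ :=
  fun ξ => (((‖ξ‖ ^ 2 + 0)⁻¹ ^ N : ℝ) : ℂ) * 𝓕 (cx u) ξ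

theorem WV_mlt {a : ℕ} (N : ℕ) {u : SmV n} (hu : u ∈ WV n a) :
    ∃ h : ℝ → En n → ℂ, Fam ((a : ℤ) - 2 * N) h ∧ h 0 = mlt N u.1 := by
  obtain ⟨Φ, h1, h2⟩ := hu
  refine ⟨_, h2.quotPow N, ?_⟩
  funext ξ
  rw [mlt, ← h1, SchwartzMap.fourier_coe]

theorem mlt_DV {a : ℕ} (N : ℕ) (j : Fin n) {u : SmV n} (hu : u ∈ WV n a) :
    mlt N (DV j u).1 = fun ξ : En n => 2 * Real.pi * Complex.I * (((ξ j : ℝ) : ℂ) * mlt N u.1 ξ) := by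
  obtain ⟨Φ, h1, h2⟩ := hu
  funext ξ
  have := fourier_pd_schwartz Φ j ξ
  rw [SchwartzMap.fourier_coe, SchwartzMap.fourier_coe, pd_schwartz (smooth_diff u.2) Φ h1 j, h1] at this
  rw [mlt, DV_coe, this, mlt]
  ring

/-- the inverse of the `N`-th power of the Laplacian -/
def TT (N : ℕ) (u : En n → ℝ) : En n → ℝ :=
  fun x => (-(4 * Real.pi ^ 2))⁻¹ ^ N * (𝓕⁻ (mlt N u) x).re

theorem mlt_int {a N : ℕ} (hn : 0 < n) (ha : 2 * N + 1 ≤ a + n) {u : SmV n} (hu : u ∈ WV n a) (m : ℕ) :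
    Integrable (fun ξ => ‖ξ‖ ^ m * ‖mlt N u.1 ξ‖) := by
  obtain ⟨h, H, e⟩ := WV_mlt N hu
  rw [← e]
  exact H.integrable_pow hn (by omega) m le_rfl

theorem mlt_int0 {a N : ℕ} (hn : 0 < n) (ha : 2 * N + 1 ≤ a + n) {u : SmV n} (hu : u ∈ WV n a) :
    Integrable (mlt N u.1) := by
  obtain ⟨h, H, e⟩ := WV_mlt N hu
  rw [← e]
  exact H.integrable hn (by omega) le_rfl

theorem TT_contDiff {a N : ℕ} (hn : 0 < n) (ha : 2 * N + 1 ≤ a + n) {u : SmV n} (hu : u ∈ WV n a) :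
    ContDiff ℝ (⊤ : ℕ∞) (TT N u.1) :=
  contDiff_const.mul (Complex.reCLM.contDiff.comp (fourierInv_contDiff (mlt_int hn ha hu)))

theorem TT_pd {a N : ℕ} (hn : 0 < n) (ha : 2 * N + 1 ≤ a + n) {u : SmV n} (hu : u ∈ WV n a)
    (j : Fin n) : pd j (TT N u.1) = TT N (DV j u).1 := by
  funext x
  have hd : DifferentiableAt ℝ (𝓕⁻ (mlt N u.1)) x :=
    (fourierInv_contDiff (mlt_int hn ha hu)).differentiable (by simp) x
  have h1 := ((Complex.reCLM.hasFDerivAt (x := 𝓕⁻ (mlt N u.1) x)).comp x hd.hasFDerivAt).const_mul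
    ((-(4 * Real.pi ^ 2))⁻¹ ^ N)
  unfold pd
  erw [h1.fderiv]
  have h2 := fourierInv_fderiv (mlt_int0 hn ha hu) (by simpa using mlt_int hn ha hu 1) x j
  simp only [smul_apply, ContinuousLinearMap.comp_apply, h2, TT, mlt_DV N j hu]
  rfl

theorem cx_fourier_add {a : ℕ} {u v : SmV n} (hu : u ∈ WV n a) (hv : v ∈ WV n a) :
    𝓕 (cx (u + v).1) = fun ξ => 𝓕 (cx u.1) ξ + 𝓕 (cx v.1) ξ := by
  obtain ⟨Φ, h1, _⟩ := hu
  obtain ⟨Ψ, h3, _⟩ := hv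
  have e : cx (u + v).1 = ⇑(Φ + Ψ) := by
    funext x
    simp [h1, h3, cx]
  rw [e, ← h1, ← h3, ← SchwartzMap.fourier_coe, ← SchwartzMap.fourier_coe, ← SchwartzMap.fourier_coe,
    FourierTransform.fourier_add]
  rfl

theorem TT_add {a N : ℕ} (hn : 0 < n) (ha : 2 * N + 1 ≤ a + n) {u v : SmV n} (hu : u ∈ WV n a)
    (hv : v ∈ WV n a) : TT N (u + v).1 = TT N u.1 + TT N v.1 := by
  have e : mlt N (u + v).1 = mlt N u.1 + mlt N v.1 := by
    funext ξ
    simp only [mlt, cx_fourier_add hu hv, Pi.add_apply]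
    ring
  funext x
  have h2 : 𝓕⁻ (mlt N u.1 + mlt N v.1) x = 𝓕⁻ (mlt N u.1) x + 𝓕⁻ (mlt N v.1) x := by
    simp only [Real.fourierInv_eq_fourier_neg, Real.fourier_eq]
    rw [← integral_add]
    · simp
    · exact (Real.fourierIntegral_convergent_iff _).2 (mlt_int0 hn ha hu)
    · exact (Real.fourierIntegral_convergent_iff _).2 (mlt_int0 hn ha hv)
  simp only [TT, e, h2, Complex.add_re, Pi.add_apply]
  ring

theorem TT_smul {a N : ℕ} (c : ℝ) {u : SmV n} (hu : u ∈ WV n a) :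
    TT N (c • u).1 = c • TT N u.1 := by
  have e0 : 𝓕 (cx (c • u).1) = fun ξ => (c : ℂ) * 𝓕 (cx u.1) ξ := by
    obtain ⟨Φ, h1, _⟩ := hu
    have e : cx (c • u).1 = ⇑((c : ℂ) • Φ) := by
      funext x
      simp [h1, cx]
    rw [e, ← h1, ← SchwartzMap.fourier_coe, ← SchwartzMap.fourier_coe, FourierTransform.fourier_smul]
    rfl
  have e : mlt N (c • u).1 = fun ξ => (c : ℂ) * mlt N u.1 ξ := by
    funext ξ
    simp only [mlt, e0]
    ring
  funext x
  have h2 : 𝓕⁻ (fun ξ => (c : ℂ) * mlt N u.1 ξ) x = (c : ℂ) * 𝓕⁻ (mlt N u.1) x := by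
    simp only [Real.fourierInv_eq', smul_eq_mul]
    rw [← integral_const_mul]
    congr 1
    funext ξ
    ring
  simp only [TT, e, h2, Complex.re_ofReal_mul, Pi.smul_apply, smul_eq_mul]
  ring

theorem TT_tendsto (N : ℕ) (u : En n → ℝ) : Tendsto (TT N u) (cocompact (En n)) (nhds 0) := by
  have h := ((Complex.continuous_re.tendsto 0).comp (fourierInv_tendsto (mlt N u))).const_mul
    ((-(4 * Real.pi ^ 2))⁻¹ ^ N)
  have e : TT N u = fun x => (-(4 * Real.pi ^ 2))⁻¹ ^ N * (𝓕⁻ (mlt N u) x).re := rfl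
  rw [e]
  simpa only [mul_zero, Complex.zero_re, Function.comp_def] using h

theorem TT_bound {a N : ℕ} (hn : 0 < n) (r : ℕ) (ha : 2 * N + 1 + r ≤ a + n) {u : SmV n}
    (hu : u ∈ WV n a) : ∃ C : ℝ, 0 ≤ C ∧ ∀ x : En n, (1 + ‖x‖) ^ r * |TT N u.1 x| ≤ C := by
  obtain ⟨h, H, e⟩ := WV_mlt N hu
  obtain ⟨C, hC0, hC⟩ := H.fourier_bound2 hn r (by omega)
  refine ⟨|(-(4 * Real.pi ^ 2))⁻¹ ^ N| * C, by positivity, fun x => ?_⟩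
  have h1 := hC x
  rw [e] at h1
  rw [TT, abs_mul, mul_left_comm]
  refine mul_le_mul_of_nonneg_left (le_trans ?_ h1) (abs_nonneg _)
  gcongr
  exact Complex.abs_re_le_norm _

/-- Laplacian on smooth functions -/
def LV (u : SmV n) : SmV n := ∑ j, DV j (DV j u)

theorem LV_WV {a : ℕ} {u : SmV n} (hu : u ∈ WV n a) : LV u ∈ WV n (a + 2) :=
  Submodule.sum_mem _ (fun j _ => WV_DV _ j _ (WV_DV _ j _ hu))

theorem WV_cx_fourier_sum {ι : Type*} (s : Finset ι) {a : ℕ} (u : ι → SmV n) (hu : ∀ i, u i ∈ WV n a)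
    (ξ : En n) : 𝓕 (cx (∑ i ∈ s, u i).1) ξ = ∑ i ∈ s, 𝓕 (cx (u i).1) ξ := by
  classical
  induction s using Finset.induction_on with
  | empty =>
    have : cx (0 : SmV n).1 = fun _ => (0 : ℂ) := by funext x; simp [cx]
    simp only [Finset.sum_empty, this, Real.fourier_eq]
    simp
  | insert i s hi ih =>
    rw [Finset.sum_insert hi, Finset.sum_insert hi, cx_fourier_add (hu i) (Submodule.sum_mem _ (fun j _ => hu j))]
    beta_reduce
    rw [ih]

theorem LV_fourier {a : ℕ} {u : SmV n} (hu : u ∈ WV n a) (ξ : En n) :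
    𝓕 (cx (LV u).1) ξ = -(4 * Real.pi ^ 2 : ℂ) * ((‖ξ‖ ^ 2 : ℝ) : ℂ) * 𝓕 (cx u.1) ξ := by
  have h1 : ∀ (j : Fin n) (b : ℕ) (w : SmV n), w ∈ WV n b → 𝓕 (cx (DV j w).1) ξ =
      2 * Real.pi * Complex.I * (((ξ j : ℝ) : ℂ) * 𝓕 (cx w.1) ξ) := by
    intro j b w hw
    simpa [mlt] using congrFun (mlt_DV 0 j hw) ξ
  rw [LV, WV_cx_fourier_sum _ _ (fun j => WV_DV _ j _ (WV_DV _ j _ hu))]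
  rw [EuclideanSpace.real_norm_sq_eq]
  push_cast
  rw [Finset.mul_sum, Finset.sum_mul]
  refine Finset.sum_congr rfl (fun j _ => ?_)
  rw [h1 j _ _ (WV_DV _ j _ hu), h1 j _ _ hu]
  linear_combination (4 * Real.pi ^ 2 * ((ξ j : ℝ) : ℂ) ^ 2 * 𝓕 (cx u.1) ξ) * Complex.I_sq

theorem LVN_fourier (N : ℕ) {a : ℕ} {u : SmV n} (hu : u ∈ WV n a) (ξ : En n) :
    LV^[N] u ∈ WV n a ∧
    𝓕 (cx (LV^[N] u).1) ξ = (-(4 * Real.pi ^ 2 : ℂ) * ((‖ξ‖ ^ 2 : ℝ) : ℂ)) ^ N * 𝓕 (cx u.1) ξ := by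
  induction N with
  | zero => simpa using hu
  | succ N ih =>
    rw [Function.iterate_succ_apply']
    refine ⟨WV_anti (by omega) _ (LV_WV ih.1), ?_⟩
    rw [LV_fourier ih.1, ih.2]
    ring

theorem TT_LV (N : ℕ) (hn : 0 < n) {a : ℕ} {u : SmV n} (hu : u ∈ WV n a) :
    TT N (LV^[N] u).1 = u.1 := by
  have hc : (-(4 * Real.pi ^ 2 : ℝ)) ≠ 0 := by simp [Real.pi_ne_zero]
  have e : mlt N (LV^[N] u).1 =ᵐ[volume] fun ξ => ((((-(4 * Real.pi ^ 2)) ^ N : ℝ)) : ℂ) * 𝓕 (cx u.1) ξ := by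
    filter_upwards [ae_ne_zero hn] with ξ hξ
    rw [mlt, (LVN_fourier N hu ξ).2]
    have : (‖ξ‖ : ℂ) ≠ 0 := by simpa using hξ
    push_cast
    rw [mul_pow, add_zero, inv_pow]
    field_simp
  funext x
  have h1 : 𝓕⁻ (mlt N (LV^[N] u).1) x = ((((-(4 * Real.pi ^ 2)) ^ N : ℝ)) : ℂ) * 𝓕⁻ (𝓕 (cx u.1)) x := by
    simp only [Real.fourierInv_eq', smul_eq_mul]
    rw [← integral_const_mul]
    refine integral_congr_ae ?_
    filter_upwards [e] with ξ hξ
    rw [hξ]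
    ring
  have h2 : 𝓕⁻ (𝓕 (cx u.1)) x = (u.1 x : ℂ) := by
    obtain ⟨Φ, h1, _⟩ := hu
    rw [← h1, ← SchwartzMap.fourier_coe, ← SchwartzMap.fourierInv_coe, FourierPair.fourierInv_fourier_eq, h1]
    rfl
  rw [TT, h1, h2, Complex.re_ofReal_mul, Complex.ofReal_re, ← mul_assoc, ← mul_pow, inv_mul_cancel₀ hc]
  simp

end FourierPart3

section FinalPart

variable {n : ℕ}

/-- the components of an abstract tensor field as functions -/
def co {m : ℕ} (u : SySub n (SmV n) m) : (Fin m → Fin n) → En n → ℝ := fun i => (u.1 i).1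

theorem co_contDiff {m : ℕ} (u : SySub n (SmV n) m) (i : Fin m → Fin n) :
    ContDiff ℝ (⊤ : ℕ∞) (co u i) := (u.1 i).2

theorem co_sym {m : ℕ} (u : SySub n (SmV n) m) : IsSymField (co u) :=
  fun π i => congrArg Subtype.val (u.2 π i)

/-- packaging of a smooth symmetric field -/
def pk {m : ℕ} (u : (Fin m → Fin n) → En n → ℝ) (h1 : ∀ i, ContDiff ℝ (⊤ : ℕ∞) (u i))
    (h2 : IsSymField u) : SySub n (SmV n) m :=
  ⟨fun i => ⟨u i, h1 i⟩, fun π i => Subtype.ext (h2 π i)⟩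

theorem co_pk {m : ℕ} (u : (Fin m → Fin n) → En n → ℝ) (h1 : ∀ i, ContDiff ℝ (⊤ : ℕ∞) (u i))
    (h2 : IsSymField u) : co (pk u h1 h2) = u := rfl

theorem co_inj {m : ℕ} {u v : SySub n (SmV n) m} (h : co u = co v) : u = v := by
  apply Subtype.ext
  funext i
  exact Subtype.ext (congrFun h i)

/-- difference of two fields -/
def sb {m : ℕ} (u v : SySub n (SmV n) m) : SySub n (SmV n) m := u + (-1 : ℝ) • v

theorem co_sub {m : ℕ} (u v : SySub n (SmV n) m) (i : Fin m → Fin n) (x : En n) :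
    co (sb u v) i x = co u i x - co v i x := by
  change co u i x + (-1) * co v i x = _
  ring

theorem sb_eq_zero {m : ℕ} (u v : SySub n (SmV n) m) : sb u v = 0 ↔ u = v := by
  constructor
  · intro h
    apply co_inj
    funext i x
    have h1 := co_sub u v i x
    rw [h] at h1
    exact (sub_eq_zero.1 h1.symm)
  · rintro rfl
    apply co_inj
    funext i x
    rw [co_sub, sub_self]
    rfl

theorem co_dA {m : ℕ} (u : SySub n (SmV n) m) : co (dA DV m u) = dsym (co u) := by
  funext i
  change ((((m + 1).factorial : ℝ))⁻¹ • ∑ π : Equiv.Perm (Fin (m + 1)),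
    DV ((i ∘ π) (Fin.last m)) (u.1 (fun s => (i ∘ π) s.castSucc)) : SmV n).1 = _
  rw [Submodule.coe_smul, Submodule.coe_sum]
  rfl

theorem co_vA {m : ℕ} (u : SySub n (SmV n) (m + 1)) : co (vA DV m u) = divg (co u) := by
  funext i x
  change ((∑ j, DV j (u.1 (Fin.snoc i j)) : SmV n).1) x = _
  rw [Submodule.coe_sum, Finset.sum_apply]
  rfl

theorem co_dpA {m : ℕ} (k : ℕ) (u : SySub n (SmV n) m) : co (dpA DV k u) = dpow k (co u) := by
  induction k with
  | zero => rfl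
  | succ k ih =>
    change co (dA DV _ (dpA DV k u)) = dsym (dpow k (co u))
    rw [co_dA, ih]

theorem co_vpA (k : ℕ) : ∀ {m : ℕ} (u : SySub n (SmV n) (m + k)),
    co (vpA DV k u) = divpow k (p := m) (co u) := by
  induction k with
  | zero => intro m u; rfl
  | succ k ih =>
    intro m u
    change co (vpA DV k (vA DV _ u)) = divpow k (p := m) (divg (co u))
    rw [ih, co_vA]

theorem LV_coe (u : SmV n) : (LV u).1 = lap u.1 := by
  funext x
  rw [LV, Submodule.coe_sum, Finset.sum_apply]
  rfl

theorem LVN_coe (N : ℕ) (u : SmV n) : (LV^[N] u).1 = lap^[N] u.1 := by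
  induction N with
  | zero => rfl
  | succ N ih => rw [Function.iterate_succ_apply', Function.iterate_succ_apply', LV_coe, ih]

theorem LAN_apply {m : ℕ} (N : ℕ) (u : SySub n (SmV n) m) (i : Fin m → Fin n) :
    ((LA DV m ^ N) u).1 i = LV^[N] (u.1 i) := by
  induction N with
  | zero => rfl
  | succ N ih =>
    rw [Function.iterate_succ_apply', ← ih, pow_succ']
    rfl

open Classical in
/-- inverse of the power of the Laplacian as a total map -/
def TV (N : ℕ) (u : SmV n) : SmV n :=
  if h : ContDiff ℝ (⊤ : ℕ∞) (TT N u.1) then ⟨TT N u.1, h⟩ else 0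

theorem TV_coe {a N : ℕ} (hn : 0 < n) (ha : 2 * N + 1 ≤ a + n) {u : SmV n} (hu : u ∈ WV n a) :
    (TV N u).1 = TT N u.1 := by
  rw [TV, dif_pos (TT_contDiff hn ha hu)]

theorem TV_DV {a N : ℕ} (hn : 0 < n) (ha : 2 * N + 1 ≤ a + n) {u : SmV n} (hu : u ∈ WV n a)
    (j : Fin n) : DV j (TV N u) = TV N (DV j u) := by
  apply Subtype.ext
  rw [DV_coe, TV_coe hn ha hu, TV_coe hn (by omega) (WV_DV _ j _ hu), TT_pd hn ha hu]

theorem TV_add {a N : ℕ} (hn : 0 < n) (ha : 2 * N + 1 ≤ a + n) {u v : SmV n} (hu : u ∈ WV n a)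
    (hv : v ∈ WV n a) : TV N (u + v) = TV N u + TV N v := by
  apply Subtype.ext
  rw [TV_coe hn ha (Submodule.add_mem _ hu hv), TT_add hn ha hu hv, Submodule.coe_add,
    TV_coe hn ha hu, TV_coe hn ha hv]

theorem TV_smul {a N : ℕ} (hn : 0 < n) (ha : 2 * N + 1 ≤ a + n) (c : ℝ) {u : SmV n}
    (hu : u ∈ WV n a) : TV N (c • u) = c • TV N u := by
  apply Subtype.ext
  rw [TV_coe hn ha (Submodule.smul_mem _ c hu), TT_smul c hu, Submodule.coe_smul,
    TV_coe hn ha hu]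

theorem TV_sum {ι : Type*} (s : Finset ι) {a N : ℕ} (hn : 0 < n) (ha : 2 * N + 1 ≤ a + n)
    (u : ι → SmV n) (hu : ∀ i, u i ∈ WV n a) : TV N (∑ i ∈ s, u i) = ∑ i ∈ s, TV N (u i) := by
  classical
  induction s using Finset.induction_on with
  | empty =>
    have h := TV_smul hn ha (0 : ℝ) (Submodule.zero_mem (WV n a))
    simpa using h
  | insert i s hi ih =>
    rw [Finset.sum_insert hi, Finset.sum_insert hi,
      TV_add hn ha (hu i) (Submodule.sum_mem _ (fun j _ => hu j)), ih]

/-- componentwise inverse of the power of the Laplacian -/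
def TF (N : ℕ) {m : ℕ} (u : SySub n (SmV n) m) : SySub n (SmV n) m :=
  ⟨fun i => TV N (u.1 i), fun π i => congrArg (TV N) (u.2 π i)⟩

theorem TF_dA {a N m : ℕ} (hn : 0 < n) (ha : 2 * N + 1 ≤ a + n) {u : SySub n (SmV n) m}
    (hu : OrdF (WV n) a u) : dA DV m (TF N u) = TF N (dA DV m u) := by
  apply Subtype.ext
  funext i
  have hw : ∀ r : Fin (m + 1), DV (i r) (u.1 (i ∘ r.succAbove)) ∈ WV n (a + 1) :=
    fun r => WV_DV _ _ _ (hu _)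
  change _ = TV N ((dA DV m u).1 i)
  rw [dA_apply, dA_apply, TV_smul hn (a := a + 1) (by omega) _ (Submodule.sum_mem _ (fun r _ => hw r)),
    TV_sum _ hn (a := a + 1) (by omega) _ hw]
  congr 1
  refine Finset.sum_congr rfl (fun r _ => ?_)
  exact TV_DV hn ha (hu _) _

theorem TF_vA {a N m : ℕ} (hn : 0 < n) (ha : 2 * N + 1 ≤ a + n) {u : SySub n (SmV n) (m + 1)}
    (hu : OrdF (WV n) a u) : vA DV m (TF N u) = TF N (vA DV m u) := by
  apply Subtype.ext
  funext i
  change ∑ j, DV j (TV N (u.1 (Fin.snoc i j))) = TV N (∑ j, DV j (u.1 (Fin.snoc i j)))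
  rw [TV_sum _ hn (a := a + 1) (by omega) _ (fun j => WV_DV _ _ _ (hu _))]
  refine Finset.sum_congr rfl (fun r _ => ?_)
  exact TV_DV hn ha (hu _) _

theorem TF_dpA {a N m : ℕ} (hn : 0 < n) (ha : 2 * N + 1 ≤ a + n) (k : ℕ) {u : SySub n (SmV n) m}
    (hu : OrdF (WV n) a u) : dpA DV k (TF N u) = TF N (dpA DV k u) := by
  induction k with
  | zero => rfl
  | succ k ih =>
    change dA DV _ (dpA DV k (TF N u)) = TF N (dA DV _ (dpA DV k u))
    rw [ih, TF_dA hn (a := a + k) (by omega) (OrdF_dpA DV (WV n) WV_DV k u hu)]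

theorem TF_vpA {N : ℕ} (hn : 0 < n) (k : ℕ) : ∀ {a m : ℕ} (_ : 2 * N + 1 ≤ a + n)
    {u : SySub n (SmV n) (m + k)} (_ : OrdF (WV n) a u), vpA DV k (TF N u) = TF N (vpA DV k u) := by
  induction k with
  | zero => intro a m _ u _; rfl
  | succ k ih =>
    intro a m ha u hu
    exact (congrArg (vpA DV k) (TF_vA (m := m + k) hn ha hu)).trans
      (ih (a := a + 1) (by omega) (OrdF_vA DV (WV n) WV_DV (m := m + k) u hu))

theorem TF_LAN {a N m : ℕ} (hn : 0 < n) (ha : 1 ≤ a + n) {u : SySub n (SmV n) m}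
    (hu : OrdF (WV n) a u) : TF N ((LA DV m ^ N) u) = u := by
  apply Subtype.ext
  funext i
  apply Subtype.ext
  have h := OrdF_LAp DV (WV n) WV_DV N u hu
  change (TV N (((LA DV m ^ N) u).1 i)).1 = _
  rw [TV_coe hn (a := a + 2 * N) (by omega) (h i), LAN_apply, TT_LV N hn (hu i)]

theorem TF_co {a N m : ℕ} (hn : 0 < n) (ha : 2 * N + 1 ≤ a + n) {u : SySub n (SmV n) m}
    (hu : OrdF (WV n) a u) (i : Fin m → Fin n) : co (TF N u) i = TT N (u.1 i).1 :=
  TV_coe hn ha (hu i)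

theorem TF_tendsto {a N m : ℕ} (hn : 0 < n) (ha : 2 * N + 1 ≤ a + n) {u : SySub n (SmV n) m}
    (hu : OrdF (WV n) a u) (i : Fin m → Fin n) :
    Tendsto (co (TF N u) i) (cocompact (En n)) (nhds 0) := by
  rw [TF_co hn ha hu]
  exact TT_tendsto _ _

theorem TF_bound {a N m : ℕ} (hn : 0 < n) (r : ℕ) (ha : 2 * N + 1 + r ≤ a + n)
    {u : SySub n (SmV n) m} (hu : OrdF (WV n) a u) (e : ℝ) (he : e = -(r : ℝ)) :
    ∃ C : ℝ, 0 ≤ C ∧ ∀ x, ∑ i, |co (TF N u) i x| ≤ C * (1 + ‖x‖) ^ e := by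
  choose C hC0 hC using fun i => TT_bound hn r ha (hu i)
  refine ⟨∑ i, C i, Finset.sum_nonneg (fun i _ => hC0 i), fun x => ?_⟩
  rw [Finset.sum_mul]
  refine Finset.sum_le_sum (fun i _ => ?_)
  have hx : 0 < 1 + ‖x‖ := by positivity
  rw [TF_co hn (by omega) hu, he, Real.rpow_neg hx.le, Real.rpow_natCast, ← div_eq_mul_inv,
    le_div_iff₀ (by positivity), mul_comm]
  exact hC i x

theorem tensNorm_le {m : ℕ} (F : (Fin m → Fin n) → ℝ) : tensNorm F ≤ ∑ i, |F i| := by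
  unfold tensNorm
  rw [Real.sqrt_le_left (Finset.sum_nonneg (fun i _ => abs_nonneg _))]
  calc ∑ i, F i ^ 2 = ∑ i, |F i| ^ 2 := by simp
    _ ≤ (∑ i, |F i|) ^ 2 := Finset.sum_sq_le_sq_sum_of_nonneg (fun i _ => abs_nonneg _)

theorem vpA_sub (k : ℕ) {m : ℕ} (u v : SySub n (SmV n) (m + k)) :
    vpA DV k (sb u v) = sb (vpA DV k u) (vpA DV k v) := by
  rw [sb, sb, map_add, map_smul]

theorem dpA_sub (k : ℕ) {m : ℕ} (u v : SySub n (SmV n) m) :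
    dpA DV k (sb u v) = sb (dpA DV k u) (dpA DV k v) := by
  rw [sb, sb, map_add, map_smul]

theorem uniq_aux {p k : ℕ} (hn : 0 < n) (u : SySub n (SmV n) p)
    (h0 : ∀ i, Tendsto (co u i) (cocompact (En n)) (nhds 0))
    (h : vpA DV k (dpA DV k u) = 0) : u = 0 := by
  have h1 := BA_vd DV DV_comm p k u
  rw [h, map_zero] at h1
  apply Subtype.ext
  funext i
  apply Subtype.ext
  refine polyharmonic_eq_zero hn (u.1 i).2 (h0 i) (k * (p + 1)) ?_
  rw [← LVN_coe, ← LAN_apply, ← h1]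
  rfl

end FinalPart

/-- decomposition of a Schwartz symmetric `m`-tensor field into its
`k`-solenoidal part `g` and `k`-potential part `d^k v`, with decay estimates and
uniqueness.  The rank is `m = p + k` (so `k ≤ m`), and `k ≤ n − 1` is expressed
as `k + 1 ≤ n`. -/
theorem k_solenoidal_k_potential_decomposition
    (n p k : ℕ) (hk1 : 1 ≤ k) (hkn : k + 1 ≤ n)
    (f : (Fin (p + k) → Fin n) → En n → ℝ)
    (hf : IsSchwartzField f) (hfsym : IsSymField f) :
    ∃ (g : (Fin (p + k) → Fin n) → En n → ℝ) (v : (Fin p → Fin n) → En n → ℝ),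
      ((∀ i, ContDiff ℝ (⊤ : ℕ∞) (g i)) ∧ (∀ j, ContDiff ℝ (⊤ : ℕ∞) (v j)) ∧
        IsSymField g ∧ IsSymField v ∧
        (∀ i x, f i x = g i x + dpow k v i x) ∧
        (∀ i x, divpow k (p := p) g i x = 0) ∧
        (∀ i, Tendsto (g i) (cocompact (En n)) (nhds 0)) ∧
        (∀ j, Tendsto (v j) (cocompact (En n)) (nhds 0))) ∧
      (∃ C : ℝ,
        (∀ x, tensNorm (fun i => g i x) ≤ C * (1 + ‖x‖) ^ ((1 : ℝ) - n)) ∧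
        (∀ ℓ, ℓ ≤ k → ∀ x,
          tensNorm (fun i => dpow ℓ v i x) ≤ C * (1 + ‖x‖) ^ ((k : ℝ) + 1 - ℓ - n))) ∧
      (∀ (g' : (Fin (p + k) → Fin n) → En n → ℝ) (v' : (Fin p → Fin n) → En n → ℝ),
        ((∀ i, ContDiff ℝ (⊤ : ℕ∞) (g' i)) ∧ (∀ j, ContDiff ℝ (⊤ : ℕ∞) (v' j)) ∧
          IsSymField g' ∧ IsSymField v' ∧
          (∀ i x, f i x = g' i x + dpow k v' i x) ∧
          (∀ i x, divpow k (p := p) g' i x = 0) ∧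
          (∀ i, Tendsto (g' i) (cocompact (En n)) (nhds 0)) ∧
          (∀ j, Tendsto (v' j) (cocompact (En n)) (nhds 0))) →
        g' = g ∧ v' = v) := by
  have hn : 0 < n := by omega
  have hfs : ∀ i, ContDiff ℝ (⊤ : ℕ∞) (f i) := by
    intro i
    obtain ⟨φ, h⟩ := hf i
    rw [← h]
    exact φ.smooth _
  have hW : ∀ (a : ℕ) (j : Fin n) (v : SmV n), v ∈ WV n a → DV j v ∈ WV n (a + 1) :=
    fun a j v hv => WV_DV a j v hv
  let fA : SySub n (SmV n) (p + k) := pk f hfs hfsym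
  have hfA : OrdF (WV n) 0 fA := by
    intro i
    obtain ⟨φ, h⟩ := hf i
    exact WV_zero _ φ h
  let N : ℕ := k * (p + 1)
  let a : ℕ := 0 + k + 2 * p * k
  have hNa : 2 * N = a + k := by
    simp only [N, a]
    ring
  let F : SySub n (SmV n) p := BA DV p k (vpA DV k fA)
  have hF : OrdF (WV n) a F :=
    OrdF_BA DV (WV n) hW k _ (OrdF_vpA DV (WV n) hW k fA hfA)
  let v : SySub n (SmV n) p := TF N F
  let g : SySub n (SmV n) (p + k) := sb fA (dpA DV k v)
  have hdv : ∀ l, dpA DV l v = TF N (dpA DV l F) := fun l => TF_dpA hn (a := a) (by omega) l hF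
  have hdF : ∀ l, OrdF (WV n) (a + l) (dpA DV l F) := fun l => OrdF_dpA DV (WV n) hW l F hF
  have hvdv : vpA DV k (dpA DV k v) = vpA DV k fA := by
    rw [hdv, TF_vpA hn k (a := a + k) (by omega) (hdF k), vd_BA DV DV_comm]
    exact TF_LAN hn (a := 0 + k) (by omega) (OrdF_vpA DV (WV n) hW k fA hfA)
  have hvg : vpA DV k g = 0 := by
    have e : vpA DV k g = sb (vpA DV k fA) (vpA DV k (dpA DV k v)) := vpA_sub k fA _
    rw [e, hvdv]
    exact (sb_eq_zero _ _).2 rfl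
  have hf0 : TF 0 fA = fA := TF_LAN (N := 0) hn (a := 0) (by omega) hfA
  have hgt : ∀ i, Tendsto (co g i) (cocompact (En n)) (nhds 0) := by
    intro i
    have h1 : Tendsto (co fA i) (cocompact (En n)) (nhds 0) := by
      rw [← hf0]
      exact TF_tendsto hn (a := 0) (by omega) hfA i
    have h2 : Tendsto (co (dpA DV k v) i) (cocompact (En n)) (nhds 0) := by
      rw [hdv]
      exact TF_tendsto hn (a := a + k) (by omega) (hdF k) i
    have h3 := h1.sub h2
    rw [sub_zero] at h3
    have e : co g i = fun x => co fA i x - co (dpA DV k v) i x := funext (fun x => co_sub _ _ i x)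
    rw [e]
    exact h3
  refine ⟨co g, co v, ⟨co_contDiff g, co_contDiff v, co_sym g, co_sym v, ?_, ?_, hgt,
    TF_tendsto hn (a := a) (by omega) hF⟩, ?_, ?_⟩
  · intro i x
    rw [← co_dpA, co_sub]
    change f i x = f i x - _ + _
    ring
  · intro i x
    rw [← co_vpA, hvg]
    rfl
  · obtain ⟨C0, hC0, hb0⟩ := TF_bound (N := 0) hn (n - 1) (a := 0) (by omega) hfA ((1 : ℝ) - n)
      (by push_cast [Nat.cast_sub (show 1 ≤ n by omega)]; ring)
    have hl : ∀ l : ℕ, ∃ C : ℝ, 0 ≤ C ∧ (l ≤ k → ∀ x,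
        ∑ i, |co (dpA DV l v) i x| ≤ C * (1 + ‖x‖) ^ ((k : ℝ) + 1 - l - n)) := by
      intro l
      by_cases hlk : l ≤ k
      · obtain ⟨C, hC, hb⟩ := TF_bound (N := N) hn (n + l - (k + 1)) (a := a + l) (by omega) (hdF l)
          ((k : ℝ) + 1 - l - n)
          (by push_cast [Nat.cast_sub (show k + 1 ≤ n + l by omega)]; ring)
        refine ⟨C, hC, fun _ x => ?_⟩
        rw [hdv]
        exact hb x
      · exact ⟨0, le_rfl, fun h => absurd h hlk⟩
    choose C hC hb using hl
    refine ⟨C0 + ∑ l ∈ Finset.range (k + 1), C l, fun x => ?_, fun l hlk x => ?_⟩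
    · have h1 := hb0 x
      have h2 := hb k le_rfl x
      have e : (k : ℝ) + 1 - k - n = 1 - n := by ring
      rw [e] at h2
      rw [hf0] at h1
      have h3 : C k ≤ ∑ l ∈ Finset.range (k + 1), C l :=
        Finset.single_le_sum (fun l _ => hC l) (by simp)
      refine (tensNorm_le _).trans ?_
      have hp : 0 ≤ (1 + ‖x‖) ^ ((1 : ℝ) - n) := by positivity
      calc ∑ i, |co g i x| ≤ ∑ i, (|co fA i x| + |co (dpA DV k v) i x|) :=
            Finset.sum_le_sum (fun i _ => by rw [co_sub]; exact abs_sub _ _)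
        _ ≤ C0 * (1 + ‖x‖) ^ ((1 : ℝ) - n) + C k * (1 + ‖x‖) ^ ((1 : ℝ) - n) := by
            rw [Finset.sum_add_distrib]
            exact add_le_add h1 h2
        _ = (C0 + C k) * (1 + ‖x‖) ^ ((1 : ℝ) - n) := by ring
        _ ≤ _ := by gcongr
    · have h2 := hb l hlk x
      rw [co_dpA] at h2
      have h3 : C l ≤ ∑ l ∈ Finset.range (k + 1), C l :=
        Finset.single_le_sum (fun l _ => hC l) (by simp; omega)
      refine (tensNorm_le _).trans (h2.trans ?_)
      gcongr
      linarith
  · rintro g' v' ⟨hg', hv', sg', sv', hfe, hdg, -, tv'⟩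
    let gA : SySub n (SmV n) (p + k) := pk g' hg' sg'
    let vB : SySub n (SmV n) p := pk v' hv' sv'
    have e1 : gA = sb fA (dpA DV k vB) := by
      apply co_inj
      funext i x
      rw [co_sub, co_dpA]
      change g' i x = f i x - dpow k v' i x
      rw [hfe]
      ring
    have e2 : vpA DV k gA = 0 := by
      apply co_inj
      rw [co_vpA]
      funext i x
      exact hdg i x
    have e3 : vpA DV k (dpA DV k (sb vB v)) = 0 := by
      rw [dpA_sub, vpA_sub, hvdv, sb_eq_zero]
      rw [e1, vpA_sub, sb_eq_zero] at e2
      exact e2.symm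
    have e4 : sb vB v = 0 := by
      refine uniq_aux (k := k) hn _ (fun i => ?_) e3
      have h3 := (tv' i).sub (TF_tendsto hn (a := a) (N := N) (by omega) hF i)
      rw [sub_zero] at h3
      have e : co (sb vB v) i = fun x => v' i x - co v i x := funext (fun x => co_sub _ _ i x)
      rw [e]
      exact h3
    have e5 : vB = v := (sb_eq_zero _ _).1 e4
    refine ⟨?_, congrArg co e5⟩
    have e6 : gA = g := by
      rw [e1, e5]
    exact congrArg co e6
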